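/- In G(𝒜): if the m-th symbol of L is a relation symbol R of arity n, and a₁,…,aₙ ∈ A are such that w_m(a₁,…,aₙ,b) = e holds in G(𝒜) (where the aᵢ denote the images of the corresponding generators), then R^𝒜(a₁,…,aₙ) holds in 𝒜. -/

import Mathlib

/-!
Common setup: an `L`-structure `𝒜` for a language whose symbols are enumerated
(`m`-th symbol, `m ≥ 1`, each a function or relation symbol of arity ≥ 1), and the
presented group `G(𝒜)` of Harrison-Trainor and Ho.
-/

/-- A first-order language with symbols enumerated by `ℕ` (the `m`-th symbol, for `m ≥ 1`,
is a function symbol if `isFunc m`, and a relation symbol otherwise, of arity `arity m ≥ 1`),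
together with an interpretation on a domain `A`: `funcInterp m` interprets the `m`-th symbol
when it is a function symbol, and `relInterp m` when it is a relation symbol. -/
structure IndexedStructure where
  A : Type
  arity : ℕ → ℕ
  arity_pos : ∀ m, 1 ≤ m → 1 ≤ arity m
  isFunc : ℕ → Prop
  funcInterp : ∀ m, (Fin (arity m) → A) → A
  relInterp : ∀ m, (Fin (arity m) → A) → Prop

/-- The generating set of `G(𝒜)`: one generator for each element of the domain `A`,
plus five further generators `b`, `c`, `d`, `f₁`, `f₂`. -/
inductive GenSym (A : Type) : Type
  | elt : A → GenSym A
  | b : GenSym A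
  | c : GenSym A
  | d : GenSym A
  | f1 : GenSym A
  | f2 : GenSym A

/-- `chainProd lo x y = x y^{(lo+1)²} x y^{(lo+2)²} ⋯ x y^{(lo+1000)²}`.
So `u_A = chainProd 0`, `u_b = chainProd 1000`, `u_c = chainProd 2000`,
`u_d = chainProd 3000`, and `v = chainProd 4000`. -/
def chainProd {G : Type*} [Group G] (lo : ℕ) (x y : G) : G :=
  ((List.range 1000).map fun k => x * y ^ ((lo + k + 1) ^ 2)).prod

/-- `wProd m xs y = x₁⋯xₙ y^{100m+1} x₁⋯xₙ y^{100m+2} ⋯ x₁⋯xₙ y^{100m+100}`,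
i.e. the word `w_m(x₁,…,xₙ,y)`. -/
def wProd {G : Type*} [Group G] (m : ℕ) {n : ℕ} (xs : Fin n → G) (y : G) : G :=
  ((List.range 100).map fun k => (List.ofFn xs).prod * y ^ (100 * m + k + 1)).prod

/-- The set of relators of the presentation of `G(𝒜)`. -/
def grpRels (S : IndexedStructure) (p₁ p₂ : ℕ) : Set (FreeGroup (GenSym S.A)) :=
  {FreeGroup.of GenSym.f1 ^ p₁, FreeGroup.of GenSym.f2 ^ p₂,
    chainProd 4000 (FreeGroup.of GenSym.f1) (FreeGroup.of GenSym.f2),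
    chainProd 4000 (FreeGroup.of GenSym.f2) (FreeGroup.of GenSym.f1),
    chainProd 1000 (FreeGroup.of GenSym.b) (FreeGroup.of GenSym.f1),
    chainProd 1000 (FreeGroup.of GenSym.b) (FreeGroup.of GenSym.f2),
    chainProd 2000 (FreeGroup.of GenSym.c) (FreeGroup.of GenSym.f1),
    chainProd 2000 (FreeGroup.of GenSym.c) (FreeGroup.of GenSym.f2),
    chainProd 3000 (FreeGroup.of GenSym.d) (FreeGroup.of GenSym.f1),
    chainProd 3000 (FreeGroup.of GenSym.d) (FreeGroup.of GenSym.f2)}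
  ∪ {r | ∃ a : S.A,
      r = chainProd 0 (FreeGroup.of (GenSym.elt a)) (FreeGroup.of GenSym.c) ∨
      r = chainProd 0 (FreeGroup.of (GenSym.elt a)) (FreeGroup.of GenSym.d)}
  ∪ {r | ∃ m, 1 ≤ m ∧ S.isFunc m ∧ ∃ as : Fin (S.arity m) → S.A,
      r = wProd m (fun i => FreeGroup.of (GenSym.elt (as i))) (FreeGroup.of GenSym.b) *
        (FreeGroup.of (GenSym.elt (S.funcInterp m as)))⁻¹}
  ∪ {r | ∃ m, 1 ≤ m ∧ ¬ S.isFunc m ∧ ∃ as : Fin (S.arity m) → S.A,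
      S.relInterp m as ∧
      r = wProd m (fun i => FreeGroup.of (GenSym.elt (as i))) (FreeGroup.of GenSym.b)}

/-- The group `G(𝒜)`, presented on the generators `GenSym A` with relators `grpRels`. -/
abbrev GA (S : IndexedStructure) (p₁ p₂ : ℕ) : Type :=
  PresentedGroup (grpRels S p₁ p₂)

/-- The image in `G(𝒜)` of a generator. -/
def gen (S : IndexedStructure) (p₁ p₂ : ℕ) (g : GenSym S.A) : GA S p₁ p₂ :=
  PresentedGroup.of g

namespace SC

/-- A system of cyclically reduced relators, given as periodic bi-infinite words,
closed under shifts and inversion, satisfying a small cancellation condition. -/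
structure RelSys (L : Type) (inv : L → L) where
  inv_inv : ∀ l, inv (inv l) = l
  R : (ℤ → L) → ℤ → Prop
  pos : ∀ {f n}, R f n → 0 < n
  per : ∀ {f n}, R f n → ∀ i, f (i + n) = f i
  red : ∀ {f n}, R f n → ∀ i, f (i + 1) ≠ inv (f i)
  shift : ∀ {f n}, R f n → ∀ k, R (fun i => f (i + k)) n
  rev : ∀ {f n}, R f n → ∀ k, R (fun i => inv (f (k - i))) n
  sc : ∀ {f n g k l}, R f n → R g k → n ≤ 5 * l →
    (∀ i, 0 ≤ i → i < l → f i = g i) → f = g ∧ n = k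

/-- The universe of vertices. -/
inductive U (L : Type) : Type
  | base : ℤ → U L
  | node : ℕ → U L → List L → U L

def U.tag {L : Type} : U L → ℕ
  | .base _ => 0
  | .node k _ _ => k + 1

variable {L : Type} {inv : L → L}

def PathOn (E : U L → L → U L → Prop) (f : ℤ → L) (γ : ℤ → U L) (a b : ℤ) : Prop :=
  ∀ i, a ≤ i → i < b → E (γ i) (f i) (γ (i + 1))

def Closed (E : U L → L → U L → Prop) (f : ℤ → L) (n : ℤ) (u : U L) : Prop :=
  ∃ δ : ℤ → U L, δ 0 = u ∧ (∀ i, E (δ i) (f i) (δ (i + 1))) ∧ ∀ i, δ (i + n) = δ i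

/-- deterministic and symmetric -/
structure DS (inv : L → L) (E : U L → L → U L → Prop) : Prop where
  sym : ∀ {u l v}, E u l v → E v (inv l) u
  det : ∀ {u l v v'}, E u l v → E u l v' → v = v'

structure Stage (Rs : RelSys L inv) (k : ℕ) (E : U L → L → U L → Prop) : Prop
    extends DS inv E where
  tag : ∀ {u l v}, E u l v → u.tag ≤ k
  good : ∀ {f n l γ}, Rs.R f n → 2 * n ≤ 5 * l → PathOn E f γ 0 l → Closed E f n (γ 0)

/-- forward uniqueness of paths -/
theorem path_unique {E : U L → L → U L → Prop}
    (ds : DS inv E)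
    {f : ℤ → L} {γ δ : ℤ → U L} {a b : ℤ} (h1 : PathOn E f γ a b) (h2 : PathOn E f δ a b)
    (h0 : γ a = δ a) : ∀ i, a ≤ i → i ≤ b → γ i = δ i := by
  intro i hi
  induction i, hi using Int.leInduction with
  | base => intro _; exact h0
  | succ i hi ih =>
    intro hb
    have := ih (by omega)
    have e1 := h1 i hi (by omega)
    have e2 := h2 i hi (by omega)
    rw [this] at e1
    exact ds.det e1 e2

theorem path_unique_back {E : U L → L → U L → Prop}
    (ds : DS inv E)
    {f : ℤ → L} {γ δ : ℤ → U L} {a b : ℤ} (h1 : PathOn E f γ a b) (h2 : PathOn E f δ a b)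
    (h0 : γ b = δ b) : ∀ i, a ≤ i → i ≤ b → γ i = δ i := by
  intro i hi hib
  have := path_unique ds (f := fun i => inv (f (-i - 1))) (γ := fun i => γ (-i))
    (δ := fun i => δ (-i)) (a := -b) (b := -a) ?_ ?_ (by simpa using h0) (-i) (by omega) (by omega)
  · simpa using this
  · intro j hj1 hj2
    have := ds.sym (h1 (-j - 1) (by omega) (by omega))
    rw [show -j - 1 + 1 = -j by ring] at this
    beta_reduce
    rwa [show -(j + 1) = -j - 1 by ring]
  · intro j hj1 hj2
    have := ds.sym (h2 (-j - 1) (by omega) (by omega))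
    rw [show -j - 1 + 1 = -j by ring] at this
    beta_reduce
    rwa [show -(j + 1) = -j - 1 by ring]

theorem closed_of_path {E : U L → L → U L → Prop} {f : ℤ → L} {n : ℤ} (hn : 0 < n)
    (hper : ∀ i, f (i + n) = f i)
    {δ : ℤ → U L} (h : PathOn E f δ 0 n) (h0 : δ n = δ 0) : Closed E f n (δ 0) := by
  have hmul : ∀ c i : ℤ, f (i + n * c) = f i := by
    intro c
    induction c using Int.induction_on with
    | zero => intro i; simp
    | succ c ih =>
      intro i
      rw [show i + n * ((c : ℤ) + 1) = (i + n * c) + n by ring, hper, ih]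
    | pred c ih =>
      intro i
      rw [← hper, show i + n * (-(c : ℤ) - 1) + n = (i + n * (-c)) by ring, ih]
  refine ⟨fun i => δ (i % n), by simp, ?_, ?_⟩
  · intro i
    have h1 := Int.emod_nonneg i hn.ne'
    have h2 := Int.emod_lt_of_pos i hn
    have h3 := h (i % n) h1 h2
    have h4 : f (i % n) = f i := by
      conv_rhs => rw [← Int.emod_add_mul_ediv i n, hmul]
    rw [h4] at h3
    have h5 : δ (i % n + 1) = δ ((i + 1) % n) := by
      by_cases hc : i % n + 1 < n
      · congr 1
        have : (i + 1) % n = (i % n + 1) % n := by simp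
        rw [this, Int.emod_eq_of_lt (by omega) hc]
      · have hc' : i % n + 1 = n := by omega
        have : (i + 1) % n = (i % n + 1) % n := by simp
        rw [this, hc', h0]; simp
    rwa [h5] at h3
  · intro i; simp

theorem closed_fwd {E : U L → L → U L → Prop}
    (ds : DS inv E)
    {f : ℤ → L} {n : ℤ} {γ : ℤ → U L} {a b : ℤ} (hab : a ≤ b) (h : PathOn E f γ a b)
    (hc : Closed E (fun i => f (i + a)) n (γ a)) : Closed E (fun i => f (i + b)) n (γ b) := by
  obtain ⟨δ, h0, h1, h2⟩ := hc
  have := path_unique ds (δ := fun i => δ (i - a)) h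
    (by
      intro i _ _
      have := h1 (i - a)
      simp only [sub_add_cancel] at this
      rwa [show i - a + 1 = i + 1 - a by ring] at this) (by simp [h0]) b hab le_rfl
  refine ⟨fun i => δ (i + (b - a)), by simp [this], ?_, ?_⟩
  · intro i
    have := h1 (i + (b - a))
    beta_reduce at this ⊢
    rw [show i + (b - a) + a = i + b by ring] at this
    rwa [show i + (b - a) + 1 = i + 1 + (b - a) by ring] at this
  · intro i
    beta_reduce
    rw [show i + n + (b - a) = i + (b - a) + n by ring, h2]

theorem closed_back {E : U L → L → U L → Prop}
    (ds : DS inv E)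
    {f : ℤ → L} {n : ℤ} {γ : ℤ → U L} {a b : ℤ} (hab : a ≤ b) (h : PathOn E f γ a b)
    (hc : Closed E (fun i => f (i + b)) n (γ b)) : Closed E (fun i => f (i + a)) n (γ a) := by
  obtain ⟨δ, h0, h1, h2⟩ := hc
  have := path_unique_back ds (δ := fun i => δ (i - b)) h
    (by
      intro i _ _
      have := h1 (i - b)
      simp only [sub_add_cancel] at this
      rwa [show i - b + 1 = i + 1 - b by ring] at this) (by simp [h0]) a le_rfl hab
  refine ⟨fun i => δ (i + (a - b)), by simp [this], ?_, ?_⟩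
  · intro i
    have := h1 (i + (a - b))
    beta_reduce at this ⊢
    rw [show i + (a - b) + b = i + a by ring] at this
    rwa [show i + (a - b) + 1 = i + 1 + (a - b) by ring] at this
  · intro i
    beta_reduce
    rw [show i + n + (a - b) = i + (a - b) + n by ring, h2]

/-! ### arcs -/

def flipf (inv : L → L) (q : ℤ) (f : ℤ → L) : ℤ → L := fun j => inv (f (q - 1 - j))

theorem flipf_flipf (Rs : RelSys L inv) (q : ℤ) (f : ℤ → L) :
    flipf inv q (flipf inv q f) = f := by
  funext j
  simp [flipf, Rs.inv_inv]

def pre (f : ℤ → L) (i : ℤ) : List L := (List.range i.toNat).map (fun j : ℕ => f (j : ℤ))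

theorem pre_congr {f g : ℤ → L} {i : ℤ} (h : ∀ t, 0 ≤ t → t < i → f t = g t) :
    pre f i = pre g i := by
  unfold pre
  apply List.map_congr_left
  intro j hj
  rw [List.mem_range] at hj
  exact h _ (by omega) (by omega)

theorem pre_inj {f g : ℤ → L} {i j : ℤ} (hi : 0 ≤ i) (hj : 0 ≤ j) (h : pre f i = pre g j) :
    i = j ∧ ∀ t, 0 ≤ t → t < i → f t = g t := by
  have hl := congrArg List.length h
  simp only [pre, List.length_map, List.length_range] at hl
  refine ⟨by omega, ?_⟩
  intro t ht hti
  have h2 : (pre f i)[t.toNat]? = (pre g j)[t.toNat]? := by rw [h]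
  simp only [pre, List.getElem?_map] at h2
  rw [List.getElem?_range (by omega), List.getElem?_range (by omega)] at h2
  simp only [Option.map_some, Option.some.injEq] at h2
  rwa [Int.toNat_of_nonneg ht] at h2

def cand (inv : L → L) (v v' : U L) (f : ℤ → L) (q i : ℤ) : U L × List L → Prop :=
  fun x => (2 * i ≤ q ∧ x = (v, pre f i)) ∨ (2 * (q - i) ≤ q ∧ x = (v', pre (flipf inv q f) (q - i)))

open Classical in
noncomputable def vert (inv : L → L) (k : ℕ) (v v' : U L) (f : ℤ → L) (q i : ℤ) : U L :=
  if i ≤ 0 then v else if q ≤ i then v' else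
    U.node k (@Classical.epsilon _ ⟨(v, [])⟩ (cand inv v v' f q i)).1
      (@Classical.epsilon _ ⟨(v, [])⟩ (cand inv v v' f q i)).2

structure Arc (Rs : RelSys L inv) (k : ℕ) (E : U L → L → U L → Prop) where
  v : U L
  v' : U L
  f : ℤ → L
  n : ℤ
  q : ℤ
  hR : Rs.R f n
  hv : v.tag ≤ k
  hv' : v'.tag ≤ k
  out : ∀ u, ¬ E v (f 0) u
  out' : ∀ u, ¬ E v' (inv (f (q - 1))) u
  hq : q ≤ n
  big : 3 * n < 5 * q
  path : ∃ γ : ℤ → U L, γ q = v' ∧ γ n = v ∧ PathOn E f γ q n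

variable {Rs : RelSys L inv} {k : ℕ} {E : U L → L → U L → Prop}

theorem Arc.qpos (a : Arc Rs k E) : 0 < a.q := by
  have := Rs.pos a.hR
  have := a.big
  omega

def Arc.flip (hS : Stage Rs k E) (a : Arc Rs k E) : Arc Rs k E where
  v := a.v'
  v' := a.v
  f := flipf inv a.q a.f
  n := a.n
  q := a.q
  hR := Rs.rev a.hR (a.q - 1)
  hv := a.hv'
  hv' := a.hv
  out := by
    intro u hu
    apply a.out' u
    simpa [flipf] using hu
  out' := by
    intro u hu
    apply a.out u
    simpa [flipf, Rs.inv_inv] using hu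
  hq := a.hq
  big := a.big
  path := by
    obtain ⟨γ, h1, h2, h3⟩ := a.path
    refine ⟨fun j => γ (a.q + a.n - j), by simpa using h2, by simpa using h1, ?_⟩
    intro j hj1 hj2
    have := hS.sym (h3 (a.q + a.n - j - 1) (by omega) (by omega))
    rw [show a.q + a.n - j - 1 + 1 = a.q + a.n - j by ring,
      show a.q + a.n - j - 1 = a.q - 1 - j + a.n by ring, Rs.per a.hR] at this
    simp only [flipf]
    rwa [show a.q + a.n - (j + 1) = a.q - 1 - j + a.n by ring]

noncomputable def Arc.pt (a : Arc Rs k E) (i : ℤ) : U L := vert inv k a.v a.v' a.f a.q i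

theorem Arc.pt_zero (a : Arc Rs k E) : a.pt 0 = a.v := by simp [Arc.pt, vert]
theorem Arc.pt_q (a : Arc Rs k E) : a.pt a.q = a.v' := by
  simp [Arc.pt, vert, not_le.mpr a.qpos]

theorem Arc.pt_int (a : Arc Rs k E) {i : ℤ} (h0 : 0 < i) (h1 : i < a.q) :
    ∃ x, cand inv a.v a.v' a.f a.q i x ∧ a.pt i = U.node k x.1 x.2 := by
  refine ⟨@Classical.epsilon _ ⟨(a.v, [])⟩ (cand inv a.v a.v' a.f a.q i), ?_, ?_⟩
  · apply Classical.epsilon_spec_aux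
    by_cases h : 2 * i ≤ a.q
    · exact ⟨_, Or.inl ⟨h, rfl⟩⟩
    · exact ⟨_, Or.inr ⟨by omega, rfl⟩⟩
  · simp [Arc.pt, vert, not_le.mpr h0, not_le.mpr h1]

theorem Arc.pt_tag (a : Arc Rs k E) {i : ℤ} (h0 : 0 < i) (h1 : i < a.q) :
    (a.pt i).tag = k + 1 := by
  obtain ⟨x, _, hx⟩ := a.pt_int h0 h1
  rw [hx]; rfl

theorem Arc.pt_tag_le (a : Arc Rs k E) (i : ℤ) : (a.pt i).tag ≤ k + 1 := by
  by_cases h0 : i ≤ 0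
  · simp [Arc.pt, vert, h0]; have := a.hv; omega
  · by_cases h1 : a.q ≤ i
    · simp [Arc.pt, vert, h0, h1]; have := a.hv'; omega
    · rw [a.pt_tag (by omega) (by omega)]

theorem Arc.pt_int_iff (a : Arc Rs k E) {i : ℤ} (h : k < (a.pt i).tag) : 0 < i ∧ i < a.q := by
  constructor
  · by_contra h0
    rw [Arc.pt, vert, if_pos (by omega)] at h
    have := a.hv; omega
  · by_contra h1
    by_cases h0 : i ≤ 0
    · rw [Arc.pt, vert, if_pos (by omega)] at h
      have := a.hv; omega
    · rw [Arc.pt, vert, if_neg h0, if_pos (by omega)] at h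
      have := a.hv'; omega

theorem Arc.pt_flip (hS : Stage Rs k E) (a : Arc Rs k E) (i : ℤ) :
    (a.flip hS).pt (a.q - i) = a.pt i := by
  have hq := a.qpos
  have hc : cand inv a.v' a.v (flipf inv a.q a.f) a.q (a.q - i) = cand inv a.v a.v' a.f a.q i := by
    funext x
    simp only [cand, flipf_flipf Rs, sub_sub_cancel]
    exact propext or_comm
  simp only [Arc.pt, vert, Arc.flip, hc]
  by_cases h0 : i ≤ 0
  · rw [if_pos h0, if_neg (by omega), if_pos (by omega)]
  · rw [if_neg h0]
    by_cases h1 : a.q ≤ i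
    · rw [if_pos h1, if_pos (by omega)]
    · rw [if_neg h1, if_neg (by omega), if_neg (by omega)]

theorem Arc.uniq (hS : Stage Rs k E) (a b : Arc Rs k E) (hv : a.v = b.v) (hf : a.f = b.f)
    (hn : a.n = b.n) : a.q = b.q ∧ a.v' = b.v' := by
  have key : ∀ a b : Arc Rs k E, a.v = b.v → a.f = b.f → a.n = b.n →
      a.q ≤ b.q ∧ (a.q = b.q → a.v' = b.v') := by
    intro a b hv hf hn
    obtain ⟨γ, h1, h2, h3⟩ := a.path
    obtain ⟨δ, g1, g2, g3⟩ := b.path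
    rw [← hn] at g2 g3
    rw [← hf] at g3
    have ha := a.hq
    have hb := b.hq
    constructor
    · by_contra hlt
      have g3' : PathOn E a.f δ a.q a.n := fun i hi hi' => g3 i (by omega) hi'
      have hu := path_unique_back hS.toDS h3 g3' (by rw [h2, g2, hv]) a.q le_rfl ha
      have e := hS.sym (g3 (a.q - 1) (by omega) (by omega))
      rw [sub_add_cancel, ← hu, h1] at e
      exact a.out' _ e
    · intro hqq
      have g3' : PathOn E a.f δ a.q a.n := fun i hi hi' => g3 i (by omega) hi'
      have hu := path_unique_back hS.toDS h3 g3' (by rw [h2, g2, hv]) a.q le_rfl ha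
      rw [← h1, hu, ← g1, hqq]
  have k1 := key a b hv hf hn
  have k2 := key b a hv.symm hf.symm hn.symm
  have : a.q = b.q := le_antisymm k1.1 k2.1
  exact ⟨this, k1.2 this⟩

theorem Arc.pt_eq (hS : Stage Rs k E) (a b : Arc Rs k E) (hv : a.v = b.v) {i : ℤ} (h0 : 0 ≤ i)
    (hag : ∀ t, 0 ≤ t → t < i → a.f t = b.f t) : a.pt i = b.pt i := by
  by_cases hlong : a.n ≤ 5 * i ∨ b.n ≤ 5 * i
  · have : a.f = b.f ∧ a.n = b.n := by
      rcases hlong with h | h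
      · exact Rs.sc a.hR b.hR h hag
      · have := Rs.sc b.hR a.hR h (fun t h1 h2 => (hag t h1 h2).symm)
        exact ⟨this.1.symm, this.2.symm⟩
    have h2 := Arc.uniq hS a b hv this.1 this.2
    simp only [Arc.pt, hv, this.1, h2.1, h2.2]
  · push Not at hlong
    by_cases hi0 : i = 0
    · subst hi0; rw [a.pt_zero, b.pt_zero, hv]
    have ha := a.big
    have hb := b.big
    obtain ⟨x, hx1, hx2⟩ := a.pt_int (i := i) (by omega) (by omega)
    obtain ⟨y, hy1, hy2⟩ := b.pt_int (i := i) (by omega) (by omega)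
    have ex : x = (a.v, pre a.f i) := by
      rcases hx1 with h | h
      · exact h.2
      · exfalso; have := h.1; omega
    have ey : y = (b.v, pre b.f i) := by
      rcases hy1 with h | h
      · exact h.2
      · exfalso; have := h.1; omega
    rw [hx2, hy2, ex, ey, hv, pre_congr hag]

/-- two arcs from the same vertex agree up to length `i`. -/
def Same (a : Arc Rs k E) (i : ℤ) (b : Arc Rs k E) (j : ℤ) : Prop :=
  a.v = b.v ∧ i = j ∧ ∀ t, 0 ≤ t → t < i → a.f t = b.f t

theorem Same.symm {a b : Arc Rs k E} {i j : ℤ} (h : Same a i b j) : Same b j a i := by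
  obtain ⟨h1, rfl, h3⟩ := h
  exact ⟨h1.symm, rfl, fun t h4 h5 => (h3 t h4 h5).symm⟩

theorem Arc.pt_inj (hS : Stage Rs k E) (a b : Arc Rs k E) {i j : ℤ} (hi0 : 0 < i) (hi1 : i < a.q)
    (hj0 : 0 < j) (hj1 : j < b.q) (h : a.pt i = b.pt j) :
    Same a i b j ∨ Same a i (b.flip hS) (b.q - j) ∨ Same (a.flip hS) (a.q - i) b j ∨
      Same (a.flip hS) (a.q - i) (b.flip hS) (b.q - j) := by
  obtain ⟨x, hx1, hx2⟩ := a.pt_int hi0 hi1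
  obtain ⟨y, hy1, hy2⟩ := b.pt_int hj0 hj1
  rw [hx2, hy2] at h
  have hxy : x = y := by
    injection h with _ h1 h2
    exact Prod.ext h1 h2
  subst hxy
  rcases hx1 with ⟨_, rfl⟩ | ⟨_, rfl⟩ <;> rcases hy1 with ⟨_, hy⟩ | ⟨_, hy⟩ <;>
    rw [Prod.mk.injEq] at hy <;> obtain ⟨hv, hp⟩ := hy
  · left
    obtain ⟨h1, h2⟩ := pre_inj (by omega) (by omega) hp
    exact ⟨hv, h1, h2⟩
  · right; left
    obtain ⟨h1, h2⟩ := pre_inj (by omega) (by omega) hp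
    exact ⟨hv, h1, h2⟩
  · right; right; left
    obtain ⟨h1, h2⟩ := pre_inj (by omega) (by omega) hp
    exact ⟨hv, h1, h2⟩
  · right; right; right
    obtain ⟨h1, h2⟩ := pre_inj (by omega) (by omega) hp
    exact ⟨hv, h1, h2⟩

end SC

namespace SC
variable {L : Type} {inv : L → L} {Rs : RelSys L inv} {k : ℕ} {E : U L → L → U L → Prop}

/-- The next stage: attach all relator loops at all vertices. -/
def NE (Rs : RelSys L inv) (k : ℕ) (E : U L → L → U L → Prop) (u : U L) (l : L) (u' : U L) : Prop :=
  ∃ (a : Arc Rs k E) (i : ℤ), 0 ≤ i ∧ i < a.q ∧ u = a.pt i ∧ l = a.f i ∧ u' = a.pt (i + 1)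

def Next (Rs : RelSys L inv) (k : ℕ) (E : U L → L → U L → Prop) (u : U L) (l : L) (u' : U L) :
    Prop := E u l u' ∨ NE Rs k E u l u'

theorem NE.sym (hS : Stage Rs k E) {u l u'} (h : NE Rs k E u l u') : NE Rs k E u' (inv l) u := by
  obtain ⟨a, i, h0, h1, rfl, rfl, rfl⟩ := h
  refine ⟨a.flip hS, a.q - (i + 1), by omega, ?_, (a.pt_flip hS _).symm, ?_, ?_⟩
  · simp only [Arc.flip]; omega
  · simp only [Arc.flip, flipf]
    congr 2; ring
  · rw [show a.q - (i + 1) + 1 = a.q - i by ring, a.pt_flip hS]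

/-- turning back along an arc -/
theorem same_flip_letter (hS : Stage Rs k E) {a b : Arc Rs k E} {i j : ℤ} (hi : 0 < i)
    (h : Same a i (b.flip hS) (b.q - j)) : a.f (i - 1) = inv (b.f j) := by
  obtain ⟨_, h2, h3⟩ := h
  rw [h3 (i - 1) (by omega) (by omega)]
  simp only [Arc.flip, flipf]
  congr 2; omega

theorem NE.det (hS : Stage Rs k E) {u l u' u''} (h : NE Rs k E u l u') (h' : NE Rs k E u l u'') :
    u' = u'' := by
  obtain ⟨a, i, h0, h1, rfl, rfl, rfl⟩ := h
  obtain ⟨b, j, g0, g1, gu, gl, rfl⟩ := h'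
  by_cases hi : i = 0
  · have : j = 0 := by
      by_contra hj
      have := b.pt_tag (i := j) (by omega) g1
      rw [← gu, hi, a.pt_zero] at this
      have := a.hv
      omega
    subst hi this
    rw [a.pt_zero, b.pt_zero] at gu
    apply Arc.pt_eq hS a b gu (by omega)
    intro t ht1 ht2
    have : t = 0 := by omega
    subst this
    exact gl
  · have ht := a.pt_tag (i := i) (by omega) h1
    have hj : 0 < j := (b.pt_int_iff (i := j) (by rw [← gu, ht]; omega)).1
    have hi : 0 < i := by omega
    rcases Arc.pt_inj hS a b hi h1 hj g1 gu with h | h | h | h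
    · obtain ⟨e1, e2, e3⟩ := h
      subst e2
      apply Arc.pt_eq hS a b e1 (by omega)
      intro t ht1 ht2
      by_cases hti : t = i
      · subst hti; exact gl
      · exact e3 t ht1 (by omega)
    · exfalso
      have := same_flip_letter hS hi h
      have hr := Rs.red a.hR (i - 1)
      rw [sub_add_cancel, this, Rs.inv_inv, ← gl] at hr
      exact hr rfl
    · exfalso
      have := same_flip_letter hS hj h.symm
      have hr := Rs.red b.hR (j - 1)
      rw [sub_add_cancel, this, Rs.inv_inv, ← gl] at hr
      exact hr rfl
    · obtain ⟨e1, e2, e3⟩ := h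
      rw [← a.pt_flip hS, ← b.pt_flip hS]
      rw [show b.q - (j + 1) = a.q - (i + 1) by omega]
      exact Arc.pt_eq hS _ _ e1 (by omega) (fun t ht1 ht2 => e3 t ht1 (by omega))

theorem Next.ds (hS : Stage Rs k E) : DS inv (Next Rs k E) where
  sym := by
    rintro u l v (h | h)
    · exact Or.inl (hS.sym h)
    · exact Or.inr (h.sym hS)
  det := by
    have aux : ∀ {u l v v'}, E u l v → NE Rs k E u l v' → False := by
      intro u l v v' h h'
      obtain ⟨a, i, h0, h1, rfl, rfl, rfl⟩ := h'
      by_cases hi : i = 0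
      · subst hi
        rw [a.pt_zero] at h
        exact a.out _ h
      · have := a.pt_tag (i := i) (by omega) h1
        have := hS.tag h
        omega
    rintro u l v v' (h | h) (h' | h')
    · exact hS.det h h'
    · exact (aux h h').elim
    · exact (aux h' h).elim
    · exact h.det hS h'

theorem Next.tag (hS : Stage Rs k E) {u l v} (h : Next Rs k E u l v) : u.tag ≤ k + 1 := by
  rcases h with h | h
  · have := hS.tag h; omega
  · obtain ⟨a, i, h0, h1, rfl, rfl, rfl⟩ := h
    exact a.pt_tag_le i

theorem Arc.edge (a : Arc Rs k E) {i : ℤ} (h0 : 0 ≤ i) (h1 : i < a.q) :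
    Next Rs k E (a.pt i) (a.f i) (a.pt (i + 1)) :=
  Or.inr ⟨a, i, h0, h1, rfl, rfl, rfl⟩

/-- the loop of an arc closes up in the next stage -/
theorem Arc.closed (a : Arc Rs k E) : Closed (Next Rs k E) a.f a.n a.v := by
  obtain ⟨γ, h1, h2, h3⟩ := a.path
  have hn := Rs.pos a.hR
  have hq := a.qpos
  have := closed_of_path (E := Next Rs k E) (f := a.f) hn (Rs.per a.hR)
    (δ := fun i => if i ≤ a.q then a.pt i else γ i) ?_ ?_
  · simpa [hq.le, a.pt_zero] using this
  · intro i hi1 hi2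
    beta_reduce
    by_cases hi : i < a.q
    · rw [if_pos hi.le, if_pos (by omega)]
      exact a.edge hi1 hi
    · rw [if_neg (by omega : ¬ i + 1 ≤ a.q)]
      have e := h3 i (by omega) hi2
      by_cases hiq : i = a.q
      · rw [if_pos (by omega), hiq, a.pt_q, ← h1, ← hiq]
        exact Or.inl e
      · rw [if_neg (by omega)]
        exact Or.inl e
  · skip
    rw [if_pos hq.le, a.pt_zero]
    by_cases hnq : a.n ≤ a.q
    · have : a.n = a.q := le_antisymm hnq a.hq
      rw [if_pos hnq, this, a.pt_q, ← h1, ← this, h2]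
    · rw [if_neg hnq, h2]

/-- existence of an arc at a vertex where the relator leaves -/
theorem exists_arc (hS : Stage Rs k E) {v : U L} (hv : v.tag ≤ k) {f n} (hR : Rs.R f n)
    (hout : ∀ u, ¬ E v (f 0) u) : ∃ a : Arc Rs k E, a.v = v ∧ a.f = f ∧ a.n = n := by
  have hn := Rs.pos hR
  let P : ℤ → Prop := fun p => 0 ≤ p ∧ ∃ γ : ℤ → U L, γ n = v ∧ PathOn E f γ (n - p) n
  have hb : ∀ p, P p → 5 * p < 2 * n := by
    rintro p ⟨hp, γ, h1, h2⟩
    by_contra hc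
    have hcl := hS.good (l := p) (γ := fun i => γ (i + (n - p))) (Rs.shift hR (n - p)) (by omega)
      (by
        intro i hi1 hi2
        have := h2 (i + (n - p)) (by omega) (by omega)
        beta_reduce
        rwa [show i + 1 + (n - p) = i + (n - p) + 1 by ring])
    rw [zero_add] at hcl
    have := closed_fwd hS.toDS (by omega) h2 hcl
    obtain ⟨δ, d0, d1, -⟩ := this
    have := d1 0
    rw [d0, h1] at this
    beta_reduce at this
    rw [Rs.per hR] at this
    exact hout _ this
  obtain ⟨p, ⟨hp, γ, h1, h2⟩, hmax⟩ := Int.exists_greatest_of_bdd (P := P)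
    ⟨2 * n, fun z hz => by have := hb z hz; have := hz.1; omega⟩
    ⟨0, le_rfl, fun _ => v, rfl, fun i hi1 hi2 => by omega⟩
  have hp5 := hb p ⟨hp, γ, h1, h2⟩
  refine ⟨⟨v, γ (n - p), f, n, n - p, hR, hv, ?_, hout, ?_, by omega, by omega, γ, rfl, h1, h2⟩,
    rfl, rfl, rfl⟩
  · by_cases hp0 : p = 0
    · subst hp0; rw [sub_zero, h1]; exact hv
    · exact hS.tag (h2 (n - p) le_rfl (by omega))
  · intro u hu
    have hu' := hS.sym hu
    rw [Rs.inv_inv] at hu'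
    have := hmax (p + 1) ⟨by omega, fun i => if i < n - p then u else γ i, ?_, ?_⟩
    · omega
    · beta_reduce; rw [if_neg (by omega), h1]
    · intro i hi1 hi2
      beta_reduce
      by_cases hi : i < n - p
      · rw [if_pos hi, if_neg (by omega)]
        have : i = n - p - 1 := by omega
        subst this
        rwa [sub_add_cancel]
      · rw [if_neg hi, if_neg (by omega)]
        exact h2 i (by omega) hi2

theorem PathOn.next {f : ℤ → L} {γ : ℤ → U L} {a b : ℤ} (h : PathOn E f γ a b) :
    PathOn (Next Rs k E) f γ a b := fun i h1 h2 => Or.inl (h i h1 h2)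

theorem Closed.next {f : ℤ → L} {n : ℤ} {u : U L} (h : Closed E f n u) :
    Closed (Next Rs k E) f n u := by
  obtain ⟨δ, h0, h1, h2⟩ := h
  exact ⟨δ, h0, fun i => Or.inl (h1 i), h2⟩

/-- All relators close up at old vertices. -/
theorem closed_old (hS : Stage Rs k E) {u : U L} (hu : u.tag ≤ k) {f n} (hR : Rs.R f n) :
    Closed (Next Rs k E) f n u := by
  have hn := Rs.pos hR
  by_cases hc : Closed E f n u
  · exact hc.next
  let P : ℤ → Prop := fun p => 0 ≤ p ∧ ∃ γ : ℤ → U L, γ 0 = u ∧ PathOn E f γ 0 p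
  have hb : ∀ p, P p → 5 * p < 2 * n := by
    rintro p ⟨hp, γ, h1, h2⟩
    by_contra hc'
    have hcl := hS.good (l := p) hR (by omega) h2
    rw [h1] at hcl
    exact hc hcl
  obtain ⟨p, ⟨hp, γ, h1, h2⟩, hmax⟩ := Int.exists_greatest_of_bdd (P := P)
    ⟨2 * n, fun z hz => by have := hb z hz; have := hz.1; omega⟩
    ⟨0, le_rfl, fun _ => u, rfl, fun i hi1 hi2 => by omega⟩
  have htag : (γ p).tag ≤ k := by
    by_cases hp0 : p = 0
    · subst hp0; rw [h1]; exact hu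
    · have := h2 (p - 1) (by omega) (by omega)
      rw [sub_add_cancel] at this
      exact hS.tag (hS.sym this)
  obtain ⟨a, ha1, ha2, ha3⟩ := exists_arc hS htag (Rs.shift hR p) (by
    intro w hw
    rw [zero_add] at hw
    have := hmax (p + 1) ⟨by omega, fun i => if i ≤ p then γ i else w, ?_, ?_⟩
    · omega
    · beta_reduce; rw [if_pos hp, h1]
    · intro i hi1 hi2
      beta_reduce
      by_cases hi : i < p
      · rw [if_pos hi.le, if_pos (by omega)]
        exact h2 i hi1 hi
      · have : i = p := by omega
        subst this
        rwa [if_pos le_rfl, if_neg (by omega)])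
  have hcl := a.closed
  rw [ha1, ha2, ha3] at hcl
  have := closed_back (Next.ds hS) hp h2.next hcl
  simp only [add_zero] at this
  rwa [h1] at this

/-- the part of `γ` between times `s` and `t` runs along the arc `a`, starting at `i`. -/
structure OnArc (f : ℤ → L) (γ : ℤ → U L) (a : Arc Rs k E) (s t i : ℤ) : Prop where
  st : s < t
  i0 : 0 < i
  iq : i + (t - s) < a.q
  vtx : ∀ x, s ≤ x → x ≤ t → γ x = a.pt (i + (x - s))
  ltr : ∀ x, s ≤ x → x < t → f x = a.f (i + (x - s))

/-- a long run along an arc gives that the path closes up -/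
theorem OnArc.closed (hS : Stage Rs k E) {f n} (hR : Rs.R f n) {γ : ℤ → U L} {l : ℤ}
    (hγ : PathOn (Next Rs k E) f γ 0 l)
    {a : Arc Rs k E} {s t i : ℤ} (hs : 0 ≤ s) (ht : t ≤ l) (h : OnArc f γ a s t i)
    (hlong : n ≤ 5 * (t - s) ∨ a.n ≤ 5 * (t - s)) : Closed (Next Rs k E) f n (γ 0) := by
  have hst := h.st
  have hiq := h.iq
  have hi0 := h.i0
  have hag : ∀ x, 0 ≤ x → x < t - s → f (x + s) = a.f (x + i) := by
    intro x h0 h1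
    rw [h.ltr (x + s) (by omega) (by omega)]
    congr 1; ring
  have heq : (fun x => f (x + s)) = (fun x => a.f (x + i)) ∧ n = a.n := by
    rcases hlong with hl | hl
    · exact Rs.sc (Rs.shift hR s) (Rs.shift a.hR i) hl hag
    · have := Rs.sc (Rs.shift a.hR i) (Rs.shift hR s) hl (fun x h0 h1 => (hag x h0 h1).symm)
      exact ⟨this.1.symm, this.2.symm⟩
  have h1 : Closed (Next Rs k E) (fun x => a.f (x + 0)) a.n (a.pt 0) := by
    simpa [a.pt_zero] using a.closed
  have h2 := closed_fwd (Next.ds hS) (γ := a.pt) (a := 0) (b := i) hi0.le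
    (fun x hx1 hx2 => a.edge hx1 (by omega)) h1
  rw [← heq.1, ← heq.2] at h2
  have h3 : a.pt i = γ s := by
    rw [h.vtx s le_rfl hst.le]; simp
  rw [h3] at h2
  have := closed_back (Next.ds hS) hs (fun x hx1 hx2 => hγ x hx1 (by omega)) h2
  simpa using this

theorem good_next (hS : Stage Rs k E) {f n} (hR : Rs.R f n) {γ : ℤ → U L} {l : ℤ}
    (hl : 2 * n ≤ 5 * l) (hγ : PathOn (Next Rs k E) f γ 0 l) :
    Closed (Next Rs k E) f n (γ 0) := by
  have hn := Rs.pos hR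
  by_cases hold : ∃ t, 0 ≤ t ∧ t ≤ l ∧ (γ t).tag ≤ k
  · obtain ⟨t, ht0, htl, htag⟩ := hold
    have := closed_back (Next.ds hS) ht0 (fun x hx1 hx2 => hγ x hx1 (by omega))
      (closed_old hS htag (Rs.shift hR t))
    simpa using this
  push Not at hold
  by_contra hnc
  have hedge : ∀ t, 0 ≤ t → t < l → ∃ (a : Arc Rs k E) (i : ℤ), OnArc f γ a t (t + 1) i := by
    intro t ht0 htl
    rcases hγ t ht0 htl with h | ⟨a, i, h0, h1, h2, h3, h4⟩
    · have := hS.tag h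
      have := hold t ht0 htl.le
      omega
    · have t1 := hold t ht0 htl.le
      have t2 := hold (t + 1) (by omega) (by omega)
      rw [h2] at t1
      rw [h4] at t2
      have i1 := a.pt_int_iff t1
      have i2 := a.pt_int_iff t2
      refine ⟨a, i, by omega, i1.1, by omega, ?_, ?_⟩
      · intro x hx1 hx2
        rcases (by omega : x = t ∨ x = t + 1) with rfl | rfl
        · rw [h2]; congr 1; ring
        · rw [h4]; congr 1; ring
      · intro x hx1 hx2
        have : x = t := by omega
        subst this
        rw [h3]; congr 1; ring
  have key : ∀ t, 1 ≤ t → t ≤ l →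
      (∃ a i, OnArc (Rs := Rs) (k := k) (E := E) f γ a 0 t i) ∨
      ∃ T, 0 < T ∧ (∃ a i, OnArc (Rs := Rs) (k := k) (E := E) f γ a 0 T i) ∧
        ∃ a i, OnArc (Rs := Rs) (k := k) (E := E) f γ a T t i ∧ 5 * i < a.n := by
    intro t ht
    induction t, ht using Int.leInduction with
    | base =>
      intro hl1
      left
      simpa using hedge 0 le_rfl (by omega)
    | succ t ht ih =>
      intro htl
      have ih := ih (by omega)
      obtain ⟨b, j, hb⟩ := hedge t (by omega) (by omega)
      have hb0 := hb.i0
      have hbq := hb.iq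
      have hbv : γ t = b.pt j := by
        rw [hb.vtx t le_rfl (by omega)]; congr 1; ring
      have hbv' : γ (t + 1) = b.pt (j + 1) := by
        rw [hb.vtx (t + 1) (by omega) (by omega)]; congr 1; ring
      have hbl : f t = b.f j := by
        rw [hb.ltr t le_rfl (by omega)]; congr 1; ring
      -- extension of a run
      have ext : ∀ (a : Arc Rs k E) (s i : ℤ), OnArc f γ a s t i →
          (∃ c : Arc Rs k E, OnArc f γ c s (t + 1) i ∧ (5 * i < a.n → 5 * i < c.n)) ∨
          (5 * j < a.n ∧ 5 * j < b.n ∧ i + (t - s) + j = a.q) := by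
        intro a s i ha
        have hst := ha.st
        have hi0 := ha.i0
        have hiq := ha.iq
        have hav : γ t = a.pt (i + (t - s)) := ha.vtx t hst.le le_rfl
        have hal : f (t - 1) = a.f (i + (t - s) - 1) := by
          rw [ha.ltr (t - 1) (by omega) (by omega)]; congr 1; ring
        have hred := Rs.red hR (t - 1)
        rw [sub_add_cancel] at hred
        rcases Arc.pt_inj hS a b (by omega) hiq hb0 (by omega) (hav ▸ hbv) with h | h | h | h
        · left
          obtain ⟨e1, e2, e3⟩ := h
          refine ⟨b, ⟨by omega, hi0, by omega, ?_, ?_⟩, ?_⟩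
          · intro x hx1 hx2
            by_cases hxt : x = t + 1
            · rw [hxt, hbv']; congr 1; omega
            · rw [ha.vtx x hx1 (by omega)]
              exact Arc.pt_eq hS a b e1 (by omega) (fun y hy1 hy2 => e3 y hy1 (by omega))
          · intro x hx1 hx2
            by_cases hxt : x = t
            · rw [hxt, hbl]; congr 1; omega
            · rw [ha.ltr x hx1 (by omega)]
              exact e3 _ (by omega) (by omega)
          · intro h5
            by_contra hc
            have := Rs.sc (l := i) b.hR a.hR (by omega)
              (fun y hy1 hy2 => (e3 y hy1 (by omega)).symm)
            omega
        · exfalso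
          have := same_flip_letter hS (by omega) h
          rw [← hbl, ← hal] at this
          rw [this, Rs.inv_inv] at hred
          exact hred rfl
        · right
          obtain ⟨e1, e2, e3⟩ := h
          have hne : ¬ ((a.flip hS).f = b.f) := by
            intro hfe
            have h5 := congrFun hfe j
            rw [← hbl] at h5
            simp only [Arc.flip, flipf] at h5
            rw [show a.q - 1 - j = i + (t - s) - 1 by omega, ← hal] at h5
            exact hred h5.symm
          refine ⟨?_, ?_, by omega⟩
          · by_contra hc
            exact hne (Rs.sc (l := j) (a.flip hS).hR b.hR (by simp only [Arc.flip]; omega)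
              (fun y hy1 hy2 => e3 y hy1 (by omega))).1
          · by_contra hc
            exact hne (Rs.sc (l := j) b.hR (a.flip hS).hR (by omega)
              (fun y hy1 hy2 => (e3 y hy1 (by omega)).symm)).1.symm
        · left
          obtain ⟨e1, e2, e3⟩ := h
          refine ⟨a, ⟨by omega, hi0, by omega, ?_, ?_⟩, fun h => h⟩
          · intro x hx1 hx2
            by_cases hxt : x = t + 1
            · rw [hxt, hbv', ← a.pt_flip hS, ← b.pt_flip hS]
              rw [show a.q - (i + (t + 1 - s)) = b.q - (j + 1) by omega]
              exact (Arc.pt_eq hS _ _ e1 (by omega) (fun y hy1 hy2 => e3 y hy1 (by omega))).symm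
            · exact ha.vtx x hx1 (by omega)
          · intro x hx1 hx2
            by_cases hxt : x = t
            · have h5 := e3 (a.q - 1 - (i + (t - s))) (by omega) (by omega)
              simp only [Arc.flip, flipf] at h5
              have h6 := congrArg inv h5
              rw [Rs.inv_inv, Rs.inv_inv] at h6
              rw [hxt, hbl]
              rw [show a.q - 1 - (a.q - 1 - (i + (t - s))) = i + (t - s) by ring,
                show b.q - 1 - (a.q - 1 - (i + (t - s))) = j by omega] at h6
              exact h6.symm
            · exact ha.ltr x hx1 (by omega)
      rcases ih with ⟨a, i, ha⟩ | ⟨T, hT, h1, a, i, ha, hai⟩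
      · rcases ext a 0 i ha with ⟨c, hc, _⟩ | ⟨h1, h2, _⟩
        · exact Or.inl ⟨c, i, hc⟩
        · exact Or.inr ⟨t, by omega, ⟨a, i, ha⟩, b, j, hb, h2⟩
      · rcases ext a T i ha with ⟨c, hc, hc'⟩ | ⟨h2, h3, h4⟩
        · exact Or.inr ⟨T, hT, h1, c, i, hc, hc' hai⟩
        · exfalso
          have hbig := a.big
          exact hnc (ha.closed hS hR hγ hT.le (by omega) (Or.inr (by omega)))
  rcases key l (by omega) le_rfl with ⟨a, i, ha⟩ | ⟨T, hT, ⟨a, i, ha⟩, b, j, hb, _⟩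
  · exact hnc (ha.closed hS hR hγ le_rfl le_rfl (Or.inl (by omega)))
  · have hTl := hb.st
    by_cases h5 : n ≤ 5 * T
    · exact hnc (ha.closed hS hR hγ le_rfl hTl.le (Or.inl (by omega)))
    · exact hnc (hb.closed hS hR hγ hT.le le_rfl (Or.inl (by omega)))

theorem Stage.next (hS : Stage Rs k E) : Stage Rs (k + 1) (Next Rs k E) where
  toDS := Next.ds hS
  tag := Next.tag hS
  good := fun hR hl hγ => good_next hS hR hl hγ

end SC

namespace SC
variable {L : Type} {inv : L → L} {Rs : RelSys L inv} {k : ℕ} {E : U L → L → U L → Prop}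

def stg (Rs : RelSys L inv) (E : U L → L → U L → Prop) : ℕ → U L → L → U L → Prop
  | 0 => E
  | k + 1 => Next Rs k (stg Rs E k)

theorem stg_stage (h : Stage Rs 0 E) : ∀ k, Stage Rs k (stg Rs E k)
  | 0 => h
  | k + 1 => (stg_stage h k).next

theorem stg_mono {u l v} {i j : ℕ} (hij : i ≤ j) (h : stg Rs E i u l v) : stg Rs E j u l v := by
  induction j, hij using Nat.le_induction with
  | base => exact h
  | succ j _ ih => exact Or.inl ih

def Lim (Rs : RelSys L inv) (E : U L → L → U L → Prop) (u : U L) (l : L) (v : U L) : Prop :=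
  ∃ k, stg Rs E k u l v

theorem Lim.ds (h : Stage Rs 0 E) : DS inv (Lim Rs E) where
  sym := by
    rintro u l v ⟨k, hk⟩
    exact ⟨k, (stg_stage h k).sym hk⟩
  det := by
    rintro u l v v' ⟨k, hk⟩ ⟨k', hk'⟩
    exact (stg_stage h (max k k')).det (stg_mono (le_max_left _ _) hk)
      (stg_mono (le_max_right _ _) hk')

theorem Lim.closed (h : Stage Rs 0 E) {f n} (hR : Rs.R f n) (u : U L) :
    Closed (Lim Rs E) f n u := by
  obtain ⟨δ, h0, h1, h2⟩ := closed_old (stg_stage h u.tag) le_rfl hR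
  exact ⟨δ, h0, fun i => ⟨u.tag + 1, h1 i⟩, h2⟩

/-- The base segment reading the word `w`. -/
def BaseE (inv : L → L) (w : ℤ → L) (N : ℤ) (u : U L) (l : L) (v : U L) : Prop :=
  ∃ i, 0 ≤ i ∧ i < N ∧ ((u = .base i ∧ v = .base (i + 1) ∧ l = w i) ∨
    (u = .base (i + 1) ∧ v = .base i ∧ l = inv (w i)))

theorem base_stage (Rs : RelSys L inv) (w : ℤ → L) (N : ℤ)
    (hred : ∀ i, w (i + 1) ≠ inv (w i))
    (Hw : ∀ f n s l, Rs.R f n → 0 ≤ s → s + l ≤ N → (∀ t, 0 ≤ t → t < l → f t = w (s + t)) →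
      5 * l < 2 * n) : Stage Rs 0 (BaseE inv w N) where
  sym := by
    rintro u l v ⟨i, h0, h1, ⟨rfl, rfl, rfl⟩ | ⟨rfl, rfl, rfl⟩⟩
    · exact ⟨i, h0, h1, Or.inr ⟨rfl, rfl, rfl⟩⟩
    · exact ⟨i, h0, h1, Or.inl ⟨rfl, rfl, Rs.inv_inv _⟩⟩
  det := by
    rintro u l v v' ⟨i, h0, h1, ⟨rfl, rfl, rfl⟩ | ⟨rfl, rfl, rfl⟩⟩
      ⟨j, g0, g1, ⟨e1, rfl, e2⟩ | ⟨e1, rfl, e2⟩⟩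
    · simp only [U.base.injEq] at e1; subst e1; rfl
    · simp only [U.base.injEq] at e1; subst e1; exact (hred _ e2).elim
    · simp only [U.base.injEq] at e1; subst e1; exact (hred _ e2.symm).elim
    · simp only [U.base.injEq, add_left_inj] at e1; subst e1; rfl
  tag := by
    rintro u l v ⟨i, h0, h1, ⟨rfl, rfl, rfl⟩ | ⟨rfl, rfl, rfl⟩⟩ <;> exact le_rfl
  good := by
    intro f n l γ hR hl hγ
    exfalso
    have hn := Rs.pos hR
    have key : ∀ t, 1 ≤ t → t ≤ l →
        (∃ s, 0 ≤ s ∧ s + t ≤ N ∧ γ t = .base (s + t) ∧ ∀ x, 0 ≤ x → x < t → f x = w (s + x)) ∨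
        (∃ s, 0 ≤ s - t ∧ s ≤ N ∧ γ t = .base (s - t) ∧
          ∀ x, 0 ≤ x → x < t → f x = inv (w (s - 1 - x))) := by
      intro t ht
      induction t, ht using Int.leInduction with
      | base =>
        intro h1
        obtain ⟨i, h0, h1, ⟨e1, e2, e3⟩ | ⟨e1, e2, e3⟩⟩ := hγ 0 le_rfl (by omega)
        · left
          refine ⟨i, h0, by omega, by simpa using e2, ?_⟩
          intro x hx1 hx2
          obtain rfl : x = 0 := by omega
          simpa using e3
        · right
          refine ⟨i + 1, by omega, by omega, by simpa using e2, ?_⟩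
          intro x hx1 hx2
          obtain rfl : x = 0 := by omega
          simpa using e3
      | succ t ht ih =>
        intro h1
        have hred' := Rs.red hR (t - 1)
        rw [sub_add_cancel] at hred'
        rcases ih (by omega) with ⟨s, s0, s1, s2, s3⟩ | ⟨s, s0, s1, s2, s3⟩
        · obtain ⟨i, h0, h1, ⟨e1, e2, e3⟩ | ⟨e1, e2, e3⟩⟩ := hγ t (by omega) (by omega)
          · left
            rw [s2, U.base.injEq] at e1
            refine ⟨s, s0, by omega, by rw [e2]; congr 1; omega, ?_⟩
            intro x hx1 hx2
            by_cases hx : x = t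
            · rw [hx, e3, e1]
            · exact s3 x hx1 (by omega)
          · exfalso
            rw [s2, U.base.injEq] at e1
            have := s3 (t - 1) (by omega) (by omega)
            rw [show s + (t - 1) = i by omega] at this
            rw [e3, this] at hred'
            exact hred' rfl
        · obtain ⟨i, h0, h1, ⟨e1, e2, e3⟩ | ⟨e1, e2, e3⟩⟩ := hγ t (by omega) (by omega)
          · exfalso
            rw [s2, U.base.injEq] at e1
            have := s3 (t - 1) (by omega) (by omega)
            rw [show s - 1 - (t - 1) = i by omega] at this
            rw [e3, this, Rs.inv_inv] at hred'
            exact hred' rfl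
          · right
            rw [s2, U.base.injEq] at e1
            refine ⟨s, by omega, by omega, by rw [e2]; congr 1; omega, ?_⟩
            intro x hx1 hx2
            by_cases hx : x = t
            · rw [hx, e3]; congr 2; omega
            · exact s3 x hx1 (by omega)
    rcases key l (by omega) le_rfl with ⟨s, s0, s1, s2, s3⟩ | ⟨s, s0, s1, s2, s3⟩
    · have := Hw f n s l hR s0 s1 s3
      omega
    · have := Hw _ n (s - l) l (Rs.rev hR (l - 1)) s0 (by omega) (by
        intro t ht1 ht2
        beta_reduce
        rw [s3 _ (by omega) (by omega), Rs.inv_inv]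
        congr 1; ring)
      omega

/-- Summary of the small cancellation engine. -/
theorem engine (Rs : RelSys L inv) (w : ℤ → L) (N : ℤ)
    (hred : ∀ i, w (i + 1) ≠ inv (w i))
    (Hw : ∀ f n s l, Rs.R f n → 0 ≤ s → s + l ≤ N → (∀ t, 0 ≤ t → t < l → f t = w (s + t)) →
      5 * l < 2 * n) : ∃ E : U L → L → U L → Prop, DS inv E ∧
      (∀ f n, Rs.R f n → ∀ u, Closed E f n u) ∧
      ∀ i, 0 ≤ i → i < N → E (.base i) (w i) (.base (i + 1)) := by
  have h := base_stage Rs w N hred Hw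
  refine ⟨Lim Rs (BaseE inv w N), Lim.ds h, fun f n hR u => Lim.closed h hR u, ?_⟩
  intro i h0 h1
  exact ⟨0, i, h0, h1, Or.inl ⟨rfl, rfl, rfl⟩⟩

end SC

namespace SC
variable {X : Type}

def linv (l : X × Bool) : X × Bool := (l.1, !l.2)

def lt (l : X × Bool) : FreeGroup X := if l.2 then FreeGroup.of l.1 else (FreeGroup.of l.1)⁻¹

/-- the product of the letters `f a, …, f (a+k-1)` -/
def pr (f : ℤ → X × Bool) (a : ℤ) (k : ℕ) : FreeGroup X :=
  ((List.range k).map fun i : ℕ => lt (f (a + i))).prod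

theorem pr_succ (f : ℤ → X × Bool) (a : ℤ) (k : ℕ) : pr f a (k + 1) = pr f a k * lt (f (a + k)) := by
  simp [pr, List.range_succ]

theorem group_engine (Rs : RelSys (X × Bool) linv) (w : ℤ → X × Bool) (N : ℕ) (hN : 0 < N)
    (hred : ∀ i, w (i + 1) ≠ linv (w i))
    (Hw : ∀ f n, ∀ s l : ℤ, Rs.R f n → 0 ≤ s → s + l ≤ N → (∀ t : ℤ, 0 ≤ t → t < l → f t = w (s + t)) →
      5 * l < 2 * n) (tot : ∀ l, ∃ f n, Rs.R f n ∧ f 0 = l) :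
    ∃ φ : FreeGroup X →* Equiv.Perm (U (X × Bool)),
      (∀ f, ∀ n : ℕ, Rs.R f n → φ (pr f 0 n) = 1) ∧ φ (pr w 0 N) ≠ 1 := by
  obtain ⟨E, ds, cl, bs⟩ := engine Rs w N hred Hw
  have tot' : ∀ u l, ∃ v, E u l v := by
    intro u l
    obtain ⟨f, n, hR, rfl⟩ := tot l
    obtain ⟨δ, h0, h1, -⟩ := cl f n hR u
    exact ⟨_, h0 ▸ h1 0⟩
  choose st hst using tot'
  have hst' : ∀ u l, st (st u l) (linv l) = u := fun u l => ds.det (hst _ _) (ds.sym (hst _ _))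
  let P : X → Equiv.Perm (U (X × Bool)) := fun x =>
    { toFun := fun u => st u (x, false)
      invFun := fun u => st u (x, true)
      left_inv := fun u => hst' u (x, false)
      right_inv := fun u => hst' u (x, true) }
  let φ := FreeGroup.lift P
  have hφ : ∀ u l v, E u l v → φ (lt l) v = u := by
    rintro u ⟨x, b⟩ v h
    have h' := ds.sym h
    cases b
    · simp only [lt, φ, Bool.false_eq_true, if_false, map_inv, FreeGroup.lift_apply_of]
      exact ds.det (hst _ _) h'
    · simp only [lt, φ, if_true, FreeGroup.lift_apply_of]
      exact ds.det (hst _ _) h'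
  have hpath : ∀ (f : ℤ → X × Bool) (δ : ℤ → U (X × Bool)) (k : ℕ),
      (∀ i, 0 ≤ i → i < (k : ℤ) → E (δ i) (f i) (δ (i + 1))) → φ (pr f 0 k) (δ k) = δ 0 := by
    intro f δ k
    induction k with
    | zero => intro _; simp [pr]
    | succ k ih =>
      intro h
      rw [pr_succ, map_mul, Equiv.Perm.mul_apply, zero_add]
      have h1 := hφ _ _ _ (h k (by positivity) (by push_cast; omega))
      rw [Nat.cast_succ, h1]
      exact ih (fun i h0 h1 => h i h0 (by push_cast; omega))
  refine ⟨φ, ?_, ?_⟩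
  · intro f n hR
    ext u
    obtain ⟨δ, h0, h1, h2⟩ := cl f n hR u
    have := hpath f δ n (fun i _ _ => h1 i)
    have h3 := h2 0
    rw [zero_add] at h3
    rw [h3, h0] at this
    exact this
  · intro h
    have := hpath w (fun i => .base i) N (fun i h0 h1 => bs i h0 h1)
    rw [h] at this
    simp only [Equiv.Perm.coe_one, id_eq, U.base.injEq] at this
    omega

end SC

namespace SC
variable {X : Type}

theorem linv_linv (l : X × Bool) : linv (linv l) = l := by simp [linv]

/-- A family of periodic words with strong separation properties. -/
structure WordFam (X ι : Type) where
  f : ι → ℤ → X × Bool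
  n : ι → ℤ
  pos : ∀ ρ, 0 < n ρ
  per : ∀ ρ i, f ρ (i + n ρ) = f ρ i
  red : ∀ ρ i, f ρ (i + 1) ≠ linv (f ρ i)
  core : ∀ ρ ρ' α β l, n ρ ≤ 5 * l → (∀ t, 0 ≤ t → t < l → f ρ (α + t) = f ρ' (β + t)) →
    ρ = ρ' ∧ ∀ i, f ρ (α + i) = f ρ (β + i)
  anti : ∀ ρ ρ' α k l, n ρ ≤ 5 * l → (∀ t, 0 ≤ t → t < l → f ρ (α + t) = linv (f ρ' (k - t))) →
    False

def WordFam.rel {ι : Type} (W : WordFam X ι) (Al : ι → Prop) (F : ℤ → X × Bool) (n : ℤ) : Prop :=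
  ∃ ρ, Al ρ ∧ n = W.n ρ ∧ ∃ k, F = (fun i => W.f ρ (k + i)) ∨ F = (fun i => linv (W.f ρ (k - i)))

def WordFam.toRelSys {ι : Type} (W : WordFam X ι) (Al : ι → Prop) : RelSys (X × Bool) linv where
  inv_inv := linv_linv
  R := W.rel Al
  pos := by
    rintro f n ⟨ρ, _, rfl, _⟩
    exact W.pos ρ
  per := by
    rintro f n ⟨ρ, _, rfl, k, rfl | rfl⟩ i
    · beta_reduce
      rw [← add_assoc, W.per]
    · beta_reduce
      rw [← W.per, show k - (i + W.n ρ) + W.n ρ = k - i by ring]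
  red := by
    rintro f n ⟨ρ, _, rfl, k, rfl | rfl⟩ i
    · beta_reduce
      rw [← add_assoc]
      exact W.red ρ _
    · beta_reduce
      intro h
      rw [linv_linv] at h
      have := W.red ρ (k - (i + 1))
      rw [show k - (i + 1) + 1 = k - i by ring] at this
      exact this h.symm
  shift := by
    rintro f n ⟨ρ, h, rfl, k, rfl | rfl⟩ j
    · exact ⟨ρ, h, rfl, k + j, Or.inl (by ext1 i; beta_reduce; congr 1; ring)⟩
    · exact ⟨ρ, h, rfl, k - j, Or.inr (by ext1 i; beta_reduce; congr 2; ring)⟩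
  rev := by
    rintro f n ⟨ρ, h, rfl, k, rfl | rfl⟩ j
    · exact ⟨ρ, h, rfl, k + j, Or.inr (by ext1 i; beta_reduce; congr 2; ring)⟩
    · exact ⟨ρ, h, rfl, k - j, Or.inl (by ext1 i; beta_reduce; rw [linv_linv]; congr 1; ring)⟩
  sc := by
    rintro f n g n' l ⟨ρ, _, rfl, k, rfl | rfl⟩ ⟨ρ', _, rfl, k', rfl | rfl⟩ hl h
    · obtain ⟨rfl, h2⟩ := W.core ρ ρ' k k' l hl h
      exact ⟨funext h2, rfl⟩
    · exact (W.anti ρ ρ' k k' l hl h).elim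
    · refine (W.anti ρ ρ' (k - l + 1) (k' + l - 1) l hl ?_).elim
      intro t h0 h1
      have := h (l - 1 - t) (by omega) (by omega)
      beta_reduce at this
      rw [show k - l + 1 + t = k - (l - 1 - t) by ring,
        show k' + l - 1 - t = k' + (l - 1 - t) by ring, ← this, linv_linv]
    · obtain ⟨rfl, h2⟩ := W.core ρ ρ' (k - l + 1) (k' - l + 1) l hl (by
        intro t h0 h1
        have := congrArg linv (h (l - 1 - t) (by omega) (by omega))
        beta_reduce at this
        rw [linv_linv, linv_linv] at this
        rw [show k - l + 1 + t = k - (l - 1 - t) by ring,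
          show k' - l + 1 + t = k' - (l - 1 - t) by ring, this])
      refine ⟨?_, rfl⟩
      ext1 i
      have := h2 (l - 1 - i)
      rw [show k - l + 1 + (l - 1 - i) = k - i by ring,
        show k' - l + 1 + (l - 1 - i) = k' - i by ring] at this
      rw [this]

theorem WordFam.main {ι : Type} (W : WordFam X ι) (Al : ι → Prop) (ρ₀ : ι) (h0 : ¬ Al ρ₀)
    (N : ℕ) (hN : (N : ℤ) = W.n ρ₀) (tot : ∀ x : X, ∃ ρ i, Al ρ ∧ (W.f ρ i).1 = x) :
    ∃ φ : FreeGroup X →* Equiv.Perm (U (X × Bool)),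
      (∀ ρ, Al ρ → ∀ n : ℕ, (n : ℤ) = W.n ρ → φ (pr (W.f ρ) 0 n) = 1) ∧
      φ (pr (W.f ρ₀) 0 N) ≠ 1 := by
  obtain ⟨φ, h1, h2⟩ := group_engine (W.toRelSys Al) (W.f ρ₀) N
    (by have := W.pos ρ₀; omega) (W.red ρ₀) (by
      rintro f n s l hR _ _ h
      have hn := (W.toRelSys Al).pos hR
      obtain ⟨ρ, ha, rfl, k, rfl | rfl⟩ := hR
      · by_contra hc
        obtain ⟨rfl, -⟩ := W.core ρ ρ₀ k s l (by omega) h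
        exact h0 ha
      · by_contra hc
        refine (W.anti ρ ρ₀ (k - l + 1) (s + l - 1) l (by omega) ?_).elim
        intro t h0 h1
        have := h (l - 1 - t) (by omega) (by omega)
        rw [show k - l + 1 + t = k - (l - 1 - t) by ring,
          show s + l - 1 - t = s + (l - 1 - t) by ring, ← this, linv_linv]) (by
      rintro ⟨x, b⟩
      obtain ⟨ρ, i, ha, rfl⟩ := tot x
      by_cases hb : b = (W.f ρ i).2
      · subst hb
        exact ⟨_, _, ⟨ρ, ha, rfl, i, Or.inl rfl⟩, by simp⟩
      · refine ⟨_, _, ⟨ρ, ha, rfl, i, Or.inr rfl⟩, ?_⟩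
        simp only [linv, sub_zero]
        congr 1
        revert hb
        cases b <;> cases (W.f ρ i).2 <;> simp)
  refine ⟨φ, ?_, h2⟩
  intro ρ ha n hn
  exact h1 _ _ ⟨ρ, ha, hn, 0, Or.inl (by simp)⟩

end SC

namespace SC

def isum (g : ℤ → ℤ) : ℤ → ℤ
  | Int.ofNat n => ∑ i ∈ Finset.range n, g i
  | Int.negSucc n => - ∑ i ∈ Finset.range (n + 1), g (-(i + 1))

theorem isum_zero (g : ℤ → ℤ) : isum g 0 = 0 := rfl

theorem isum_succ (g : ℤ → ℤ) (j : ℤ) : isum g (j + 1) = isum g j + g j := by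
  rcases j with n | n
  · show isum g (Int.ofNat (n + 1)) = _
    simp only [isum, Finset.sum_range_succ]
    rfl
  · rcases n with _ | n
    · show isum g (Int.ofNat 0) = _
      simp [isum]
    · rw [show Int.negSucc (n + 1) + 1 = Int.negSucc n by omega]
      simp only [isum]
      rw [Finset.sum_range_succ _ (n + 1), show -(((n + 1 : ℕ) : ℤ) + 1) = Int.negSucc (n + 1) by omega]
      ring

structure BW (X : Type) (elt : X → Prop) where
  y : X
  N : ℕ
  Npos : 0 < N
  W : ℤ → List (X × Bool)
  e : ℤ → ℕ
  Wper : ∀ j, W (j + N) = W j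
  eper : ∀ j, e (j + N) = e j
  Wne : ∀ j, W j ≠ []
  epos : ∀ j, 1 ≤ e j
  yW : ∀ j l, l ∈ W j → l.1 ≠ y
  red : ∀ j t a b, (W j)[t]? = some a → (W j)[t + 1]? = some b → b ≠ linv a
  yN : ¬ elt y
  Welt : ∀ j, (W j).length = 1 ∨ ∀ l ∈ W j, elt l.1
  Wpos : ∀ j l, l ∈ W j → ¬ elt l.1 → l.2 = true

namespace BW
variable {X : Type} {elt : X → Prop} (B : BW X elt)

def S : ℤ → ℤ := isum (fun j => ((B.W j).length : ℤ) + B.e j)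

theorem S_zero : B.S 0 = 0 := rfl

theorem S_succ (j : ℤ) : B.S (j + 1) = B.S j + ((B.W j).length + B.e j) := isum_succ _ _

theorem len_pos (j : ℤ) : 1 ≤ (B.W j).length := List.length_pos_iff.2 (B.Wne j)

theorem S_lt (j : ℤ) : B.S j < B.S (j + 1) := by
  rw [S_succ]
  have := B.len_pos j
  omega

theorem S_mono : StrictMono B.S := strictMono_int_of_lt_succ B.S_lt

def n : ℤ := B.S B.N

theorem n_pos : 0 < B.n := by
  have := B.S_mono (show (0 : ℤ) < B.N by exact_mod_cast B.Npos)
  rwa [S_zero] at this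

theorem S_per (j : ℤ) : B.S (j + B.N) = B.S j + B.n := by
  induction j using Int.induction_on with
  | zero => simp [S_zero, n]
  | succ j ih =>
    rw [show (j : ℤ) + 1 + B.N = (j + B.N) + 1 by ring, S_succ, ih, B.Wper, B.eper, S_succ]; ring
  | pred j ih =>
    have h1 := B.S_succ (-(j : ℤ) - 1)
    have h2 := B.S_succ (-(j : ℤ) - 1 + B.N)
    rw [B.Wper, B.eper, show -(j : ℤ) - 1 + B.N + 1 = -(j : ℤ) + B.N by ring, ih] at h2
    rw [sub_add_cancel] at h1
    omega

theorem S_per_mul (j c : ℤ) : B.S (j + B.N * c) = B.S j + B.n * c := by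
  induction c using Int.induction_on with
  | zero => simp
  | succ c ih =>
    rw [show j + (B.N : ℤ) * (c + 1) = (j + B.N * c) + B.N by ring, S_per, ih]; ring
  | pred c ih =>
    have := B.S_per (j + B.N * (-c - 1))
    rw [show j + (B.N : ℤ) * (-c - 1) + B.N = j + B.N * -c by ring, ih] at this
    linarith

theorem S_ge (j : ℤ) (hj : 0 ≤ j) : j ≤ B.S j := by
  induction j, hj using Int.leInduction with
  | base => exact le_rfl
  | succ j _ ih => have := B.S_lt j; omega

theorem S_le (j : ℤ) (hj : j ≤ 0) : B.S j ≤ j := by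
  induction j, hj using Int.leInductionDown with
  | base => exact le_rfl
  | pred j _ ih => have := B.S_lt (j - 1); rw [sub_add_cancel] at this; omega

theorem exists_blk (i : ℤ) : ∃ j, B.S j ≤ i ∧ i < B.S (j + 1) := by
  obtain ⟨j, h1, h2⟩ := Int.exists_greatest_of_bdd (P := fun j => B.S j ≤ i)
    ⟨max 0 i, fun z hz => by
      by_cases h : z ≤ 0
      · exact le_max_of_le_left h
      · have := B.S_ge z (by omega)
        exact le_max_of_le_right (by omega)⟩
    ⟨min 0 i, by
      have := B.S_le (min 0 i) (min_le_left _ _)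
      have := min_le_right 0 i
      omega⟩
  refine ⟨j, h1, ?_⟩
  by_contra hc
  have := h2 (j + 1) (by omega)
  omega

noncomputable def blk (i : ℤ) : ℤ := (B.exists_blk i).choose

theorem blk_spec (i : ℤ) : B.S (B.blk i) ≤ i ∧ i < B.S (B.blk i + 1) := (B.exists_blk i).choose_spec

theorem blk_eq {i j : ℤ} (h1 : B.S j ≤ i) (h2 : i < B.S (j + 1)) : B.blk i = j := by
  obtain ⟨h3, h4⟩ := B.blk_spec i
  have a := B.S_mono.lt_iff_lt.1 (lt_of_le_of_lt h1 h4)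
  have b := B.S_mono.lt_iff_lt.1 (lt_of_le_of_lt h3 h2)
  omega

noncomputable def f (i : ℤ) : X × Bool :=
  ((B.W (B.blk i))[(i - B.S (B.blk i)).toNat]?).getD (B.y, true)

theorem f_at (j : ℤ) (t : ℕ) (ht : (t : ℤ) < (B.W j).length + B.e j) :
    B.f (B.S j + t) = ((B.W j)[t]?).getD (B.y, true) := by
  have : B.blk (B.S j + t) = j := B.blk_eq (by omega) (by rw [S_succ]; omega)
  rw [f, this]
  congr 2
  omega

theorem f_W (j : ℤ) (t : ℕ) (ht : t < (B.W j).length) :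
    B.f (B.S j + t) = (B.W j)[t] := by
  rw [f_at _ _ _ (by omega)]; simp [ht]

theorem f_y (j : ℤ) (t : ℕ) (ht : (B.W j).length ≤ t) (ht' : t < (B.W j).length + B.e j) :
    B.f (B.S j + t) = (B.y, true) := by
  rw [f_at _ _ _ (by omega)]; simp [ht]

theorem f_y_iff (j : ℤ) (t : ℕ) (ht : t < (B.W j).length + B.e j) :
    B.f (B.S j + t) = (B.y, true) ↔ (B.W j).length ≤ t := by
  constructor
  · intro h
    by_contra hc
    rw [B.f_W j t (by omega)] at h
    exact B.yW j _ (List.getElem_mem (by omega : t < (B.W j).length)) (by rw [h])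
  · intro h
    exact B.f_y j t h ht

/-- position of an index -/
theorem pos (i : ℤ) : ∃ (j : ℤ) (t : ℕ), i = B.S j + t ∧ t < (B.W j).length + B.e j := by
  obtain ⟨h1, h2⟩ := B.blk_spec i
  rw [S_succ] at h2
  exact ⟨B.blk i, (i - B.S (B.blk i)).toNat, by omega, by omega⟩

theorem f_per (i : ℤ) : B.f (i + B.n) = B.f i := by
  obtain ⟨j, t, rfl, ht⟩ := B.pos i
  rw [show B.S j + t + B.n = B.S (j + B.N) + t by rw [S_per]; ring, f_at, f_at, B.Wper]
  · omega
  · rw [B.Wper, B.eper]; omega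

theorem f_per_mul (i c : ℤ) : B.f (i + B.n * c) = B.f i := by
  obtain ⟨j, t, rfl, ht⟩ := B.pos i
  have hW : ∀ c, B.W (j + B.N * c) = B.W j ∧ B.e (j + B.N * c) = B.e j := by
    intro c
    induction c using Int.induction_on with
    | zero => simp
    | succ c ih =>
      rw [show j + (B.N : ℤ) * (c + 1) = (j + B.N * c) + B.N by ring, B.Wper, B.eper]; exact ih
    | pred c ih =>
      rw [← B.Wper, ← B.eper, show j + (B.N : ℤ) * (-c - 1) + B.N = j + B.N * -c by ring]; exact ih
  rw [show B.S j + t + B.n * c = B.S (j + B.N * c) + t by rw [S_per_mul]; ring, f_at, f_at, (hW c).1]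
  · omega
  · rw [(hW c).1, (hW c).2]; omega

theorem f_last (j : ℤ) : B.f (B.S j - 1) = (B.y, true) := by
  have h := B.S_succ (j - 1)
  have := B.epos (j - 1)
  rw [sub_add_cancel] at h
  rw [show B.S j - 1 = B.S (j - 1) + ((B.W (j - 1)).length + B.e (j - 1) - 1 : ℕ) by omega]
  exact B.f_y _ _ (by omega) (by omega)

theorem f_S_ne (j : ℤ) : B.f (B.S j) ≠ (B.y, true) := by
  have := B.f_y_iff j 0 (by have := B.len_pos j; omega)
  have h := B.len_pos j
  intro hc
  simp only [Nat.cast_zero, add_zero] at this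
  have := this.1 hc
  omega

theorem start_iff (i : ℤ) : (B.f (i - 1) = (B.y, true) ∧ B.f i ≠ (B.y, true)) ↔ ∃ j, i = B.S j := by
  constructor
  · rintro ⟨h1, h2⟩
    obtain ⟨j, t, rfl, ht⟩ := B.pos i
    rw [Ne, f_y_iff _ _ _ ht] at h2
    by_cases h0 : t = 0
    · exact ⟨j, by simp [h0]⟩
    · exfalso
      rw [show B.S j + t - 1 = B.S j + (t - 1 : ℕ) by omega, f_y_iff _ _ _ (by omega)] at h1
      omega
  · rintro ⟨j, rfl⟩
    exact ⟨B.f_last j, B.f_S_ne j⟩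

theorem f_red (i : ℤ) : B.f (i + 1) ≠ linv (B.f i) := by
  obtain ⟨j, t, rfl, ht⟩ := B.pos i
  by_cases h1 : t < (B.W j).length
  · have e1 := B.f_W j t h1
    have m1 := B.yW j _ (List.getElem_mem h1)
    by_cases h2 : t + 1 < (B.W j).length
    · have e2 := B.f_W j (t + 1) h2
      rw [show B.S j + t + 1 = B.S j + (t + 1 : ℕ) by push_cast; ring, e1, e2]
      exact B.red j t _ _ (List.getElem?_eq_getElem h1) (List.getElem?_eq_getElem h2)
    · have e2 := B.f_y j (t + 1) (by omega) (by have := B.epos j; omega)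
      rw [show B.S j + t + 1 = B.S j + (t + 1 : ℕ) by push_cast; ring, e1, e2]
      intro h
      exact m1 (congrArg Prod.fst h).symm
  · have e1 := B.f_y j t (by omega) ht
    rw [e1]
    by_cases h2 : t + 1 < (B.W j).length + B.e j
    · have e2 := B.f_y j (t + 1) (by omega) h2
      rw [show B.S j + t + 1 = B.S j + (t + 1 : ℕ) by push_cast; ring, e2]
      simp [linv]
    · have e2 := B.f_W (j + 1) 0 (B.len_pos _)
      have m2 := B.yW (j + 1) _ (List.getElem_mem (B.len_pos (j + 1)))
      rw [show B.S j + t + 1 = B.S (j + 1) + (0 : ℕ) by rw [S_succ]; omega, e2]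
      intro h
      exact m2 (congrArg Prod.fst h)

theorem f_pos (i : ℤ) (h : ¬ elt (B.f i).1) : (B.f i).2 = true := by
  obtain ⟨j, t, rfl, ht⟩ := B.pos i
  by_cases h1 : t < (B.W j).length
  · rw [B.f_W j t h1] at h ⊢
    exact B.Wpos j _ (List.getElem_mem h1) h
  · rw [B.f_y j t (by omega) ht]

theorem yy {i : ℤ} {z : X × Bool} (hz : ¬ elt z.1) (h1 : B.f i = z) (h2 : B.f (i + 1) = z) :
    z = (B.y, true) := by
  by_contra hc
  obtain ⟨j, t, rfl, ht⟩ := B.pos i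
  have a1 : t < (B.W j).length := by
    by_contra h
    exact hc (h1 ▸ B.f_y j t (by omega) ht)
  have a2 : t + 1 < (B.W j).length := by
    by_contra h
    have := B.f_y j (t + 1) (by omega) (by have := B.epos j; omega)
    rw [show B.S j + t + 1 = B.S j + (t + 1 : ℕ) by push_cast; ring] at h2
    exact hc (h2 ▸ this)
  rcases B.Welt j with h | h
  · omega
  · rw [B.f_W j t a1] at h1
    exact hz (h1 ▸ h _ (List.getElem_mem a1))

/-- transporting a start -/
theorem start_trans {B B' : BW X elt} (hy : B.y = B'.y) {a b d : ℤ}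
    (h : ∀ t, a ≤ t → t < b → B.f t = B'.f (t + d)) {j : ℤ} (h1 : a < B.S j) (h2 : B.S j < b) :
    ∃ j', B.S j + d = B'.S j' := by
  rw [← start_iff, ← h _ h1.le h2, show B.S j + d - 1 = B.S j - 1 + d by ring,
    ← h _ (by omega) (by omega), ← hy, start_iff]
  exact ⟨j, rfl⟩

theorem next_start {B B' : BW X elt} (hy : B.y = B'.y) {a b d : ℤ}
    (h : ∀ t, a ≤ t → t < b → B.f t = B'.f (t + d)) {j j' : ℤ} (h1 : a < B.S j)
    (h2 : B.S (j + 1) < b) (h3 : B.S j + d = B'.S j') : B.S (j + 1) + d = B'.S (j' + 1) := by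
  have hl := B.S_lt j
  obtain ⟨j'', h4⟩ := start_trans hy h (by omega : a < B.S (j + 1)) h2
  have h5 : j' < j'' := B'.S_mono.lt_iff_lt.1 (by omega)
  by_cases h6 : j'' = j' + 1
  · rw [h4, h6]
  exfalso
  have h7 := B'.S_mono (by omega : j' + 1 < j'')
  have h8 := B'.S_lt j'
  obtain ⟨q, hq⟩ := start_trans (B := B') (B' := B) hy.symm (a := a + d) (b := b + d) (d := -d)
    (j := j' + 1) (by
      intro t ht1 ht2
      rw [h (t + -d) (by omega) (by omega)]
      congr 1; ring) (by omega) (by omega)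
  have h9 : j < q := B.S_mono.lt_iff_lt.1 (by omega)
  have h10 : q < j + 1 := B.S_mono.lt_iff_lt.1 (by omega)
  omega

theorem block_match {B B' : BW X elt} (hy : B.y = B'.y) {a b d : ℤ}
    (h : ∀ t, a ≤ t → t < b → B.f t = B'.f (t + d)) {j j' : ℤ} (h1 : a < B.S j)
    (h2 : B.S (j + 1) < b) (h3 : B.S j + d = B'.S j') : B.W j = B'.W j' ∧ B.e j = B'.e j' := by
  have h4 := next_start hy h h1 h2 h3
  rw [S_succ, S_succ] at h4
  rw [S_succ] at h2
  have p1 := B.epos j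
  have p2 := B'.epos j'
  have hag : ∀ t : ℕ, t < (B.W j).length + B.e j → B.f (B.S j + t) = B'.f (B'.S j' + t) := by
    intro t ht
    rw [h _ (by omega) (by omega)]
    congr 1; omega
  have hiff : ∀ t : ℕ, t < (B.W j).length + B.e j →
      ((B.W j).length ≤ t ↔ (B'.W j').length ≤ t) := by
    intro t ht
    rw [← f_y_iff _ _ _ ht, hag t ht, hy, f_y_iff _ _ _ (by omega)]
  have hl : (B.W j).length = (B'.W j').length := by
    have q1 := hiff (B.W j).length (by omega)
    have q2 := hiff (B'.W j').length (by omega)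
    omega
  refine ⟨List.ext_getElem hl ?_, by omega⟩
  intro t ht1 ht2
  rw [← f_W _ _ _ ht1, ← f_W _ _ _ ht2]
  exact hag t (by omega)

end BW
end SC

namespace SC

structure BFam (X : Type) (elt : X → Prop) (ι κ : Type) where
  B : ι → BW X elt
  M : ι → ℤ
  hM : ∀ ρ j, (((B ρ).W j).length : ℤ) + (B ρ).e j ≤ M ρ
  hn : ∀ ρ, 25 * M ρ < (B ρ).n
  hyy : ∀ ρ j, 2 ≤ (B ρ).e j ∨ 2 ≤ (B ρ).e (j + 1)
  Reg : ι → ℤ → Prop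
  hreg : ∀ ρ j, Reg ρ j ∨ Reg ρ (j + 1) ∨ Reg ρ (j + 2)
  hid : ∀ ρ ρ' j j', Reg ρ j → (B ρ).y = (B ρ').y → (B ρ).W j = (B ρ').W j' →
    (B ρ).e j = (B ρ').e j' → (B ρ).W (j + 1) = (B ρ').W (j' + 1) →
    (B ρ).e (j + 1) = (B ρ').e (j' + 1) → ρ = ρ' ∧ ∃ c : ℤ, j' = j + (B ρ).N * c
  z : κ → X
  p : κ → ℤ
  zinj : ∀ a b, z a = z b → a = b
  zN : ∀ a, ¬ elt (z a)
  pbig : ∀ a, 10 ^ 10 < p a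
  hpy : ∀ ρ a, (B ρ).y = z a → M ρ ≤ 10 ^ 9

namespace BFam
variable {X : Type} {elt : X → Prop} {ι κ : Type} (F : BFam X elt ι κ)

theorem S_step (ρ : ι) (j : ℤ) : (F.B ρ).S (j + 1) ≤ (F.B ρ).S j + F.M ρ := by
  rw [BW.S_succ]
  have := F.hM ρ j
  omega

theorem S_near (ρ : ι) (a : ℤ) : ∃ j, a < (F.B ρ).S j ∧ (F.B ρ).S j ≤ a + F.M ρ := by
  obtain ⟨j, h1, h2⟩ := (F.B ρ).exists_blk a
  have := F.S_step ρ j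
  exact ⟨j + 1, h2, by omega⟩

theorem win (ρ : ι) {a l : ℤ} (h : (F.B ρ).n ≤ 5 * l) :
    ∃ j, a < (F.B ρ).S j ∧ (F.B ρ).S (j + 1) < a + l ∧ (F.B ρ).S (j + 1 + 1) < a + l ∧
      (F.B ρ).S (j + 2 + 1) < a + l ∧ (F.B ρ).S (j + 2 + 1 + 1) < a + l := by
  obtain ⟨j, h1, h2⟩ := F.S_near ρ a
  have a1 := F.S_step ρ j
  have a2 := F.S_step ρ (j + 1)
  have a3 := F.S_step ρ (j + 2)
  have a4 := F.S_step ρ (j + 2 + 1)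
  have := F.hn ρ
  have b1 := (F.B ρ).S_lt j
  have e12 : (F.B ρ).S (j + 1 + 1) = (F.B ρ).S (j + 2) := by congr 1; ring
  exact ⟨j, h1, by omega, by omega, by omega, by omega⟩

/-- every long window contains two adjacent `y`s -/
theorem win_yy (ρ : ι) {a l : ℤ} (h : (F.B ρ).n ≤ 5 * l) :
    ∃ t, a ≤ t ∧ t + 1 < a + l ∧ (F.B ρ).f t = ((F.B ρ).y, true) ∧
      (F.B ρ).f (t + 1) = ((F.B ρ).y, true) := by
  obtain ⟨j, h1, h2, h3, -⟩ := F.win ρ (a := a) h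
  have aux : ∀ j, a < (F.B ρ).S j → (F.B ρ).S (j + 1) < a + l → 2 ≤ (F.B ρ).e j →
      ∃ t, a ≤ t ∧ t + 1 < a + l ∧ (F.B ρ).f t = ((F.B ρ).y, true) ∧
      (F.B ρ).f (t + 1) = ((F.B ρ).y, true) := by
    intro j h1 h2 h3
    rw [BW.S_succ] at h2
    have e1 := (F.B ρ).f_y j ((F.B ρ).W j).length le_rfl (by omega)
    have e2 := (F.B ρ).f_y j (((F.B ρ).W j).length + 1) (by omega) (by omega)
    refine ⟨_, ?_, ?_, e1, ?_⟩
    · omega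
    · omega
    · rw [← e2]; congr 1; push_cast; ring
  have := (F.B ρ).S_lt j
  rcases F.hyy ρ j with h4 | h4
  · exact aux j h1 h2 h4
  · exact aux (j + 1) (by omega) h3 h4

noncomputable def wf : κ ⊕ ι → ℤ → X × Bool
  | .inl a => fun _ => (F.z a, true)
  | .inr ρ => (F.B ρ).f

noncomputable def wn : κ ⊕ ι → ℤ
  | .inl a => F.p a
  | .inr ρ => (F.B ρ).n

theorem wf_pos (r : κ ⊕ ι) (i : ℤ) (h : ¬ elt (F.wf r i).1) : (F.wf r i).2 = true := by
  rcases r with a | ρ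
  · rfl
  · exact (F.B ρ).f_pos i h

theorem core_bb (ρ ρ' : ι) (α β l : ℤ) (hl : (F.B ρ).n ≤ 5 * l)
    (h : ∀ t, 0 ≤ t → t < l → (F.B ρ).f (α + t) = (F.B ρ').f (β + t)) :
    ρ = ρ' ∧ ∀ i, (F.B ρ).f (α + i) = (F.B ρ).f (β + i) := by
  have h' : ∀ t, α ≤ t → t < α + l → (F.B ρ).f t = (F.B ρ').f (t + (β - α)) := by
    intro t h1 h2
    have := h (t - α) (by omega) (by omega)
    rw [show α + (t - α) = t by ring] at this
    rw [this]; congr 1; ring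
  have hy : (F.B ρ).y = (F.B ρ').y := by
    obtain ⟨t, t1, t2, t3, t4⟩ := F.win_yy ρ (a := α) hl
    rw [h' _ (by omega) (by omega)] at t3 t4
    rw [show t + 1 + (β - α) = t + (β - α) + 1 by ring] at t4
    have := (F.B ρ').yy (z := ((F.B ρ).y, true)) (F.B ρ).yN t3 t4
    exact congrArg Prod.fst this
  obtain ⟨j, h1, h2, h3, h4, h5⟩ := F.win ρ (a := α) hl
  have s1 := (F.B ρ).S_lt j
  have s2 := (F.B ρ).S_lt (j + 1)
  have s3 := (F.B ρ).S_lt (j + 2)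
  rw [show j + 1 + 1 = j + 2 by ring] at s2
  have aux : ∀ j, F.Reg ρ j → α < (F.B ρ).S j → (F.B ρ).S (j + 1 + 1) < α + l →
      ρ = ρ' ∧ ∀ i, (F.B ρ).f (α + i) = (F.B ρ).f (β + i) := by
    intro j hr h1 h2
    have s1 := (F.B ρ).S_lt j
    have s2 := (F.B ρ).S_lt (j + 1)
    obtain ⟨j', h3⟩ := BW.start_trans hy h' h1 (by omega)
    have h4 := BW.next_start hy h' h1 (by omega) h3
    obtain ⟨m1, m2⟩ := BW.block_match hy h' h1 (by omega) h3
    obtain ⟨m3, m4⟩ := BW.block_match hy h' (by omega) h2 h4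
    obtain ⟨rfl, c, rfl⟩ := F.hid ρ ρ' j j' hr hy m1 m2 m3 m4
    refine ⟨rfl, fun i => ?_⟩
    rw [BW.S_per_mul] at h3
    rw [← (F.B ρ).f_per_mul _ c]
    congr 1
    linarith
  rcases F.hreg ρ j with hr | hr | hr
  · exact aux j hr h1 h3
  · exact aux (j + 1) hr (by omega) (by rwa [show j + 1 + 1 = j + 2 by ring])
  · exact aux (j + 2) hr (by omega) h5

noncomputable def toWordFam : WordFam X (κ ⊕ ι) where
  f := F.wf
  n := F.wn
  pos := by
    rintro (a | ρ)
    · exact lt_trans (by norm_num) (F.pbig a)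
    · exact (F.B ρ).n_pos
  per := by
    rintro (a | ρ) i
    · rfl
    · exact (F.B ρ).f_per i
  red := by
    rintro (a | ρ) i
    · simp [wf, linv]
    · exact (F.B ρ).f_red i
  core := by
    rintro (a | ρ) (a' | ρ') α β l hl h
    · have := F.pbig a
      simp only [wn] at hl
      have := h 0 le_rfl (by omega)
      simp only [wf, Prod.mk.injEq, and_true] at this
      obtain rfl := F.zinj _ _ this
      exact ⟨rfl, fun _ => rfl⟩
    · exfalso
      have hp := F.pbig a
      simp only [wn] at hl
      simp only [wf] at h
      have t1 := (h 0 le_rfl (by omega)).symm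
      have t2 := (h 1 (by omega) (by omega)).symm
      rw [add_zero] at t1
      have := (F.B ρ').yy (z := (F.z a, true)) (F.zN a) t1 t2
      have hM := F.hpy ρ' a (congrArg Prod.fst this).symm
      obtain ⟨j, j1, j2⟩ := F.S_near ρ' β
      have := h ((F.B ρ').S j - β) (by omega) (by omega)
      rw [show β + ((F.B ρ').S j - β) = (F.B ρ').S j by ring] at this
      exact (F.B ρ').f_S_ne j (by rw [← this]; assumption)
    · exfalso
      simp only [wn] at hl
      simp only [wf] at h
      obtain ⟨j, h1, h2, -⟩ := F.win ρ (a := α) hl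
      have := (F.B ρ).S_lt j
      have e1 := h ((F.B ρ).S j - α) (by omega) (by omega)
      have e2 := h ((F.B ρ).S j - 1 - α) (by omega) (by omega)
      rw [show α + ((F.B ρ).S j - α) = (F.B ρ).S j by ring] at e1
      rw [show α + ((F.B ρ).S j - 1 - α) = (F.B ρ).S j - 1 by ring] at e2
      have e3 := (F.B ρ).f_last j
      exact (F.B ρ).f_S_ne j (by rw [e1, ← e2, e3])
    · obtain ⟨rfl, h2⟩ := F.core_bb ρ ρ' α β l hl h
      exact ⟨rfl, h2⟩
  anti := by
    have aux : ∀ (r : κ ⊕ ι) (v : X × Bool) (k : ℤ), ¬ elt v.1 → v.2 = true →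
        v = linv (F.wf r k) → False := by
      intro r v k h1 h2 h3
      rw [h3] at h1 h2
      simp only [linv] at h1 h2
      rw [F.wf_pos r k h1] at h2
      simp at h2
    rintro (a | ρ) r' α k l hl h
    · have := F.pbig a
      simp only [wn] at hl
      exact aux r' _ _ (F.zN a) rfl (h 0 le_rfl (by omega))
    · simp only [wn] at hl
      obtain ⟨t, t1, t2, t3, t4⟩ := F.win_yy ρ (a := α) hl
      have := h (t - α) (by omega) (by omega)
      rw [show α + (t - α) = t by ring] at this
      simp only [wf] at this
      rw [t3] at this
      exact aux r' _ _ (F.B ρ).yN rfl this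

end BFam
end SC

namespace SC
variable {X : Type}

theorem pr_add (f : ℤ → X × Bool) (a : ℤ) (k k' : ℕ) :
    pr f a (k + k') = pr f a k * pr f (a + k) k' := by
  induction k' with
  | zero => simp [pr]
  | succ k' ih =>
    rw [← add_assoc, pr_succ, ih, pr_succ, mul_assoc]
    congr 4; push_cast; ring

theorem pr_list (f : ℤ → X × Bool) (a : ℤ) (l : List (X × Bool))
    (h : ∀ (t : ℕ) (ht : t < l.length), f (a + t) = l[t]) : pr f a l.length = (l.map lt).prod := by
  rw [pr]
  congr 1
  apply List.ext_getElem
  · simp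
  · intro t h1 h2
    simp only [List.length_map, List.length_range] at h1
    simp [h t h1]

namespace BW
variable {elt : X → Prop} (B : BW X elt)

def bp (j : ℤ) : FreeGroup X := ((B.W j).map lt).prod * FreeGroup.of B.y ^ B.e j

theorem pr_block (j : ℤ) : pr B.f (B.S j) ((B.W j).length + B.e j) = B.bp j := by
  rw [pr_add, pr_list _ _ _ (fun t ht => B.f_W j t ht), bp]
  congr 1
  have := pr_list B.f (B.S j + (B.W j).length) (List.replicate (B.e j) (B.y, true)) (by
    intro t ht
    rw [List.length_replicate] at ht
    rw [List.getElem_replicate, ← B.f_y j ((B.W j).length + t) (by omega) (by omega)]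
    congr 1; push_cast; ring)
  rw [List.length_replicate] at this
  rw [this]
  simp [lt]

theorem pr_all (J k : ℕ) (hk : (k : ℤ) = B.S J) :
    pr B.f 0 k = ((List.range J).map fun j : ℕ => B.bp j).prod := by
  induction J generalizing k with
  | zero =>
    have : k = 0 := by simpa [S_zero] using hk
    subst this; simp [pr]
  | succ J ih =>
    rw [Nat.cast_succ, S_succ] at hk
    have h0 := B.S_ge J (by positivity)
    rw [show k = (B.S J).toNat + ((B.W J).length + B.e J) by omega, pr_add, ih _ (by omega),
      show (0 : ℤ) + ((B.S J).toNat : ℤ) = B.S J by omega, pr_block, List.range_succ]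
    simp

theorem S_eq (J : ℕ) : B.S J = ∑ j ∈ Finset.range J, (((B.W j).length : ℤ) + B.e j) := rfl

end BW
end SC

namespace SC
open Classical

def isElt {A : Type} : GenSym A → Prop
  | .elt _ => True
  | _ => False

def lo {A : Type} : GenSym A → ℕ
  | .elt _ => 0
  | .b => 1000
  | .c => 2000
  | .d => 3000
  | .f1 => 4000
  | .f2 => 4000

theorem lo_le {A : Type} (x : GenSym A) : lo x ≤ 4000 := by cases x <;> simp [lo]

variable {A : Type}

/-- the relator `chainProd (lo x) x y` -/
def chB (x y : GenSym A) (hxy : x ≠ y) (hy : ¬ isElt y) : BW (GenSym A) isElt where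
  y := y
  N := 1000
  Npos := by norm_num
  W := fun _ => [(x, true)]
  e := fun j => (lo x + (j % 1000).toNat + 1) ^ 2
  Wper := fun _ => rfl
  eper := by
    intro j
    congr 4
    omega
  Wne := by simp
  epos := fun j => Nat.one_le_pow _ _ (by omega)
  yW := by
    intro j l hl
    simp only [List.mem_singleton] at hl
    rw [hl]; exact hxy
  red := by
    intro j t a b _ h
    simp at h
  yN := hy
  Welt := fun _ => Or.inl rfl
  Wpos := by
    intro j l hl _
    simp only [List.mem_singleton] at hl
    rw [hl]

def pl (V : List (GenSym A)) : List (GenSym A × Bool) := V.map (fun x => (x, true))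

theorem pl_red (V : List (GenSym A)) (t : ℕ) (a b : GenSym A × Bool) (ha : (pl V)[t]? = some a)
    (hb : (pl V)[t + 1]? = some b) : b ≠ linv a := by
  have h1 : a.2 = true := by
    have := List.mem_of_getElem? ha
    simp only [pl, List.mem_map] at this
    obtain ⟨x, -, rfl⟩ := this; rfl
  have h2 : b.2 = true := by
    have := List.mem_of_getElem? hb
    simp only [pl, List.mem_map] at this
    obtain ⟨x, -, rfl⟩ := this; rfl
  intro h
  have := congrArg Prod.snd h
  simp [linv, h1, h2] at this

noncomputable def W0 : List (GenSym A) → Option (GenSym A) → List (GenSym A × Bool)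
  | V, none => pl V
  | [], some _ => []
  | h :: t, some a => if h = a then (if t = [] then pl (h :: t) else pl t) else (a, false) :: pl (h :: t)

theorem W0_ne (V : List (GenSym A)) (hV : V ≠ []) (o : Option (GenSym A)) : W0 V o ≠ [] := by
  rcases o with _ | a
  · simpa [W0, pl] using hV
  · rcases V with _ | ⟨h, t⟩
    · exact (hV rfl).elim
    · simp only [W0]
      split_ifs <;> simp_all [pl]

theorem W0_len (V : List (GenSym A)) (o : Option (GenSym A)) : (W0 V o).length ≤ V.length + 1 := by
  rcases o with _ | a
  · simp [W0, pl]
  · rcases V with _ | ⟨h, t⟩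
    · simp [W0]
    · simp only [W0]
      split_ifs <;> simp only [pl, List.length_map, List.length_cons] <;> omega

theorem W0_elt (V : List (GenSym A)) (hV : ∀ x ∈ V, isElt x) (o : Option (GenSym A))
    (ho : ∀ a ∈ o, isElt a) : ∀ l ∈ W0 V o, isElt l.1 := by
  have hp : ∀ V : List (GenSym A), (∀ x ∈ V, isElt x) → ∀ l ∈ pl V, isElt l.1 := by
    intro V hV l hl
    simp only [pl, List.mem_map] at hl
    obtain ⟨x, hx, rfl⟩ := hl
    exact hV x hx
  rcases o with _ | a
  · simpa [W0] using hp V hV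
  · rcases V with _ | ⟨h, t⟩
    · simp [W0]
    · simp only [W0]
      split_ifs
      · exact hp _ hV
      · exact hp _ (fun x hx => hV x (List.mem_cons_of_mem _ hx))
      · intro l hl
        rcases List.mem_cons.1 hl with rfl | hl
        · exact ho a rfl
        · exact hp _ hV l hl

theorem W0_red (V : List (GenSym A)) (o : Option (GenSym A)) (t : ℕ) (a b : GenSym A × Bool)
    (ha : (W0 V o)[t]? = some a) (hb : (W0 V o)[t + 1]? = some b) : b ≠ linv a := by
  rcases o with _ | a'
  · exact pl_red V t a b (by simpa [W0] using ha) (by simpa [W0] using hb)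
  · rcases V with _ | ⟨h, s⟩
    · simp [W0] at ha
    · simp only [W0] at ha hb
      split_ifs at ha hb with h1 h2
      · exact pl_red _ t a b ha hb
      · exact pl_red _ t a b ha hb
      · rcases t with _ | t
        · simp only [pl, List.map_cons, List.getElem?_cons_zero,
            Option.some.injEq, List.getElem?_cons_succ] at ha hb
          rw [← ha, ← hb]
          intro h
          exact h1 (congrArg Prod.fst h)
        · simp only [List.getElem?_cons_succ] at ha hb
          exact pl_red _ t a b ha hb

def sp (V : List (GenSym A)) (o : Option (GenSym A)) : Prop := ∃ a, V = [a] ∧ o = some a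

noncomputable def wN (V : List (GenSym A)) (o : Option (GenSym A)) : ℕ := if sp V o then 99 else 100

noncomputable def wE (m : ℕ) (V : List (GenSym A)) (o : Option (GenSym A)) (j : ℤ) : ℕ :=
  if sp V o then 100 * m + (j % 99).toNat + 2 + (if j % 99 = 98 then 100 * m + 1 else 0)
  else 100 * m + (j % 100).toNat + 1

theorem wN_cases (V : List (GenSym A)) (o : Option (GenSym A)) : wN V o = 99 ∨ wN V o = 100 := by
  unfold wN; split_ifs <;> simp

noncomputable def wB (m : ℕ) (V : List (GenSym A)) (hV : V ≠ [])
    (hVe : ∀ x ∈ V, isElt x) (o : Option (GenSym A)) (ho : ∀ a ∈ o, isElt a) :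
    BW (GenSym A) isElt where
  y := .b
  N := wN V o
  Npos := by rcases wN_cases V o with h | h <;> omega
  W := fun j => if j % (wN V o : ℤ) = 0 then W0 V o else pl V
  e := wE m V o
  Wper := by intro j; simp
  eper := by
    intro j
    unfold wE wN
    by_cases h : sp V o
    · simp [h]
    · simp [h]
  Wne := by
    intro j
    split_ifs
    · exact W0_ne V hV o
    · simpa [pl] using hV
  epos := by
    intro j
    unfold wE
    split_ifs <;> omega
  yW := by
    intro j l hl
    have : isElt l.1 := by
      split_ifs at hl
      · exact W0_elt V hVe o ho l hl
      · exact W0_elt V hVe none (by simp) l hl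
    intro h
    rw [h] at this
    exact this
  red := by
    intro j t a b ha hb
    split_ifs at ha hb
    · exact W0_red V o t a b ha hb
    · exact pl_red V t a b ha hb
  yN := fun h => h
  Welt := by
    intro j
    right
    intro l hl
    split_ifs at hl
    · exact W0_elt V hVe o ho l hl
    · exact W0_elt V hVe none (by simp) l hl
  Wpos := by
    intro j l hl h
    exfalso
    apply h
    split_ifs at hl
    · exact W0_elt V hVe o ho l hl
    · exact W0_elt V hVe none (by simp) l hl

end SC

namespace SC
open Classical
variable {A : Type}

theorem chB_n (x y : GenSym A) (hxy : x ≠ y) (hy : ¬ isElt y) :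
    25 * (1 + ((lo x : ℤ) + 1000) ^ 2) < (chB x y hxy hy).n := by
  rw [BW.n, BW.S_eq]
  have h1 : ∑ j ∈ Finset.Ico 500 1000, ((lo x : ℤ) + 501) ^ 2 ≤
      ∑ j ∈ Finset.range (chB x y hxy hy).N,
        ((((chB x y hxy hy).W j).length : ℤ) + (chB x y hxy hy).e j) := by
    refine le_trans (Finset.sum_le_sum (g := fun j : ℕ =>
      ((((chB x y hxy hy).W j).length : ℤ) + (chB x y hxy hy).e j)) ?_)
      (Finset.sum_le_sum_of_subset_of_nonneg ?_ ?_)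
    · intro j hj
      rw [Finset.mem_Ico] at hj
      simp only [chB, List.length_singleton]
      have : ((lo x : ℤ) + 501) ^ 2 ≤ ((lo x : ℤ) + j + 1) ^ 2 := by
        apply pow_le_pow_left₀ <;> omega
      have e : ((j : ℤ) % 1000).toNat = j := by omega
      rw [e]
      push_cast
      linarith
    · intro j hj
      rw [Finset.mem_Ico] at hj
      exact Finset.mem_range.2 hj.2
    · intro j _ _
      positivity
  refine lt_of_lt_of_le ?_ h1
  rw [Finset.sum_const, Nat.card_Ico, nsmul_eq_mul,
    show ((1000 - 500 : ℕ) : ℤ) = 500 by norm_num]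
  have : (0 : ℤ) ≤ lo x := Int.natCast_nonneg _
  nlinarith

section
variable (m : ℕ) (V : List (GenSym A)) (hV : V ≠ [])
    (hVe : ∀ x ∈ V, isElt x) (o : Option (GenSym A)) (ho : ∀ a ∈ o, isElt a)

theorem wE_ge (j : ℤ) : 100 * m + 1 ≤ wE m V o j := by
  unfold wE; split_ifs <;> omega

theorem wE_le (j : ℤ) : wE m V o j ≤ 200 * m + 101 := by
  unfold wE
  have := Int.emod_lt_of_pos j (by norm_num : (0 : ℤ) < 99)
  have := Int.emod_lt_of_pos j (by norm_num : (0 : ℤ) < 100)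
  split_ifs <;> omega

theorem wB_n (hm : 1 ≤ m) : 25 * ((V.length : ℤ) + 1 + 200 * m + 101) < (wB m V hV hVe o ho).n := by
  rw [BW.n, BW.S_eq]
  obtain ⟨N, hN, hN'⟩ : ∃ N : ℕ, (wB m V hV hVe o ho).N = N + 1 ∧ 98 ≤ N := by
    show ∃ N : ℕ, wN V o = N + 1 ∧ 98 ≤ N
    rcases wN_cases V o with h | h
    · exact ⟨98, h, by norm_num⟩
    · exact ⟨99, h, by norm_num⟩
  rw [hN, Finset.sum_range_succ']
  have h1 : ∑ j ∈ Finset.range N, ((V.length : ℤ) + (100 * m + 1)) ≤ ∑ j ∈ Finset.range N,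
      ((((wB m V hV hVe o ho).W ((j + 1 : ℕ) : ℤ)).length : ℤ) +
        (wB m V hV hVe o ho).e ((j + 1 : ℕ) : ℤ)) := by
    apply Finset.sum_le_sum
    intro j hj
    rw [Finset.mem_range] at hj
    have e := wE_ge m V o ((j + 1 : ℕ) : ℤ)
    have hw : (wB m V hV hVe o ho).W ((j + 1 : ℕ) : ℤ) = pl V := by
      show (if ((j + 1 : ℕ) : ℤ) % (wN V o : ℤ) = 0 then W0 V o else pl V) = pl V
      have : wN V o = N + 1 := hN
      rw [if_neg]
      rw [Int.emod_eq_of_lt (by omega) (by omega)]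
      omega
    rw [hw]
    have e' : (wB m V hV hVe o ho).e ((j + 1 : ℕ) : ℤ) = wE m V o ((j + 1 : ℕ) : ℤ) := rfl
    rw [e', pl, List.length_map]
    omega
  rw [Finset.sum_const, Finset.card_range, nsmul_eq_mul] at h1
  have h2 : (98 : ℤ) * ((V.length : ℤ) + (100 * m + 1)) ≤ N * ((V.length : ℤ) + (100 * m + 1)) :=
    mul_le_mul_of_nonneg_right (by exact_mod_cast hN') (by positivity)
  have h3 : (0 : ℤ) ≤ (((wB m V hV hVe o ho).W ((0 : ℕ) : ℤ)).length : ℤ) +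
        (wB m V hV hVe o ho).e ((0 : ℕ) : ℤ) := by positivity
  have h4 : (1 : ℤ) ≤ m := by exact_mod_cast hm
  omega

/-- The regular pairs of blocks -/
def wReg (j : ℤ) : Prop := j % (wN V o : ℤ) ≤ wN V o - 3

theorem wReg_some (j : ℤ) : wReg V o j ∨ wReg V o (j + 1) ∨ wReg V o (j + 2) := by
  unfold wReg
  rcases wN_cases V o with h | h <;> rw [h] <;> push_cast <;> omega

end

theorem w_id {m m' : ℕ} {V V' : List (GenSym A)} {o o' : Option (GenSym A)} {j j' : ℤ}
    (hr : wReg V o j) (h1 : wE m V o j = wE m' V' o' j')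
    (h2 : wE m V o (j + 1) = wE m' V' o' (j' + 1)) :
    m = m' ∧ ¬ ((j + 1) % (wN V o : ℤ) = 0) ∧ ¬ ((j' + 1) % (wN V' o' : ℤ) = 0) ∧
    (wN V o = wN V' o' → ∃ c : ℤ, j' = j + (wN V o) * c) := by
  have key : m = m' ∧ ¬ ((j + 1) % (wN V o : ℤ) = 0) ∧ ¬ ((j' + 1) % (wN V' o' : ℤ) = 0) ∧
    (wN V o = wN V' o' → (wN V o : ℤ) ∣ j' - j) := by
    unfold wReg wN at hr
    unfold wE at h1 h2
    unfold wN
    by_cases s1 : sp V o <;> by_cases s2 : sp V' o' <;>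
      simp only [s1, s2, if_true, if_false, Nat.cast_ofNat] at h1 h2 hr ⊢ <;>
      (try split_ifs at h1 h2) <;> refine ⟨by omega, by omega, by omega, fun _ => by omega⟩
  obtain ⟨k1, k2, k3, k4⟩ := key
  refine ⟨k1, k2, k3, fun h => ?_⟩
  obtain ⟨c, hc⟩ := k4 h
  exact ⟨c, by linarith⟩

end SC

namespace SC
open Classical

inductive Idx (S : IndexedStructure) : Type
  | ch (x y : GenSym S.A) (hxy : x ≠ y) (hy : ¬ isElt y) (hb : y ≠ .b) : Idx S
  | w (m : ℕ) (hm : 1 ≤ m) (as : Fin (S.arity m) → S.A) : Idx S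

variable (S : IndexedStructure)

def wV (m : ℕ) (as : Fin (S.arity m) → S.A) : List (GenSym S.A) :=
  List.ofFn fun i => GenSym.elt (as i)

noncomputable def wO (m : ℕ) (as : Fin (S.arity m) → S.A) : Option (GenSym S.A) :=
  if S.isFunc m then some (.elt (S.funcInterp m as)) else none

theorem wV_ne (m : ℕ) (hm : 1 ≤ m) (as : Fin (S.arity m) → S.A) : wV S m as ≠ [] := by
  have := S.arity_pos m hm
  rw [wV, Ne, List.ofFn_eq_nil_iff]
  omega

theorem wV_elt (m : ℕ) (as : Fin (S.arity m) → S.A) : ∀ x ∈ wV S m as, isElt x := by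
  intro x hx
  simp only [wV, List.mem_ofFn] at hx
  obtain ⟨i, rfl⟩ := hx
  trivial

theorem wO_elt (m : ℕ) (as : Fin (S.arity m) → S.A) : ∀ x ∈ wO S m as, isElt x := by
  intro x hx
  unfold wO at hx
  split_ifs at hx
  · simp only [Option.mem_def, Option.some.injEq] at hx
    subst hx
    trivial
  · simp at hx

noncomputable def bw : Idx S → BW (GenSym S.A) isElt
  | .ch x y h1 h2 _ => chB x y h1 h2
  | .w m hm as => wB m (wV S m as) (wV_ne S m hm as) (wV_elt S m as) (wO S m as) (wO_elt S m as)

noncomputable def fam (p₁ p₂ : ℕ) (hp₁ : 10 ^ 10 < p₁) (hp₂ : 10 ^ 10 < p₂) :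
    BFam (GenSym S.A) isElt (Idx S) Bool where
  B := bw S
  M
    | .ch x _ _ _ _ => 1 + ((lo x : ℤ) + 1000) ^ 2
    | .w m _ as => ((wV S m as).length : ℤ) + 1 + 200 * m + 101
  hM := by
    rintro (⟨x, y, h1, h2, h3⟩ | ⟨m, hm, as⟩) j
    · simp only [bw, chB, List.length_singleton]
      have := Int.emod_lt_of_pos j (by norm_num : (0 : ℤ) < 1000)
      have : lo x + (j % 1000).toNat + 1 ≤ lo x + 1000 := by omega
      have := Nat.pow_le_pow_left this 2
      zify at this ⊢
      linarith
    · simp only [bw, wB]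
      have e := wE_le m (wV S m as) (wO S m as) j
      have l := W0_len (wV S m as) (wO S m as)
      have l' : (pl (wV S m as)).length = (wV S m as).length := by simp [pl]
      split_ifs <;> omega
  hn := by
    rintro (⟨x, y, h1, h2, h3⟩ | ⟨m, hm, as⟩)
    · exact chB_n x y h1 h2
    · exact wB_n m _ (wV_ne S m hm as) (wV_elt S m as) _ (wO_elt S m as) hm
  hyy := by
    rintro (⟨x, y, h1, h2, h3⟩ | ⟨m, hm, as⟩) j
    · simp only [bw, chB]
      have : 1 ≤ (j % 1000).toNat ∨ 1 ≤ ((j + 1) % 1000).toNat := by omega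
      rcases this with h | h
      · left
        exact le_trans (by norm_num) (Nat.pow_le_pow_left (by omega : 2 ≤ _) 2)
      · right
        exact le_trans (by norm_num) (Nat.pow_le_pow_left (by omega : 2 ≤ _) 2)
    · left
      have := wE_ge m (wV S m as) (wO S m as) j
      show 2 ≤ wE m (wV S m as) (wO S m as) j
      omega
  Reg
    | .ch _ _ _ _ _ => fun _ => True
    | .w m _ as => wReg (wV S m as) (wO S m as)
  hreg := by
    rintro (⟨x, y, h1, h2, h3⟩ | ⟨m, hm, as⟩) j
    · exact Or.inl trivial
    · exact wReg_some _ _ j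
  hid := by
    rintro (⟨x, y, h1, h2, h3⟩ | ⟨m, hm, as⟩) (⟨x', y', h1', h2', h3'⟩ | ⟨m', hm', as'⟩) j j' hr
      hy hW he hW' he'
    · simp only [bw, chB] at hy hW he
      subst hy
      simp only [List.cons.injEq, Prod.mk.injEq, and_true] at hW
      subst hW
      refine ⟨rfl, ?_⟩
      have := Nat.pow_left_injective (n := 2) (by norm_num) he
      have h : (1000 : ℤ) ∣ j' - j := by omega
      obtain ⟨c, hc⟩ := h
      refine ⟨c, ?_⟩
      simp only [bw, chB]
      push_cast
      linarith
    · exact (h3 hy).elim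
    · exact (h3' hy.symm).elim
    · obtain ⟨rfl, k1, k2, k3⟩ := w_id hr he he'
      simp only [bw, wB] at hW'
      rw [if_neg k1, if_neg k2] at hW'
      have hV : wV S m as = wV S m as' := by
        refine List.map_injective_iff.2 ?_ hW'
        intro a a' h
        exact congrArg Prod.fst h
      have has : as = as' := by
        have := List.ofFn_injective hV
        funext i
        have := congrFun this i
        simpa using this
      subst has
      exact ⟨rfl, k3 rfl⟩
  z := fun i => if i then .f1 else .f2
  p := fun i => if i then p₁ else p₂
  zinj := by
    intro a b h
    cases a <;> cases b <;> simp_all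
  zN := by
    intro a
    cases a <;> exact fun h => h
  pbig := by
    intro a
    cases a
    · show (10 ^ 10 : ℤ) < p₂
      exact_mod_cast hp₂
    · show (10 ^ 10 : ℤ) < p₁
      exact_mod_cast hp₁
  hpy := by
    rintro (⟨x, y, h1, h2, h3⟩ | ⟨m, hm, as⟩) a h
    · have := lo_le x
      have h0 : (lo x : ℤ) ≤ 4000 := by exact_mod_cast this
      have h0' : (0 : ℤ) ≤ lo x := Int.natCast_nonneg _
      simp only
      nlinarith
    · exfalso
      cases a <;> simp [bw, wB] at h

theorem map_wProd {G H : Type*} [Group G] [Group H] (φ : G →* H) (m : ℕ) {n : ℕ} (xs : Fin n → G)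
    (y : G) : φ (wProd m xs y) = wProd m (fun i => φ (xs i)) (φ y) := by
  simp only [wProd, map_list_prod, List.map_map]
  congr 1
  apply List.map_congr_left
  intro k _
  simp only [Function.comp, map_mul, map_pow, map_list_prod, List.map_ofFn, Function.comp_def]

/-- the product of the chain word -/
theorem ch_pr (x y : GenSym S.A) (h1 : x ≠ y) (h2 : ¬ isElt y) (k : ℕ)
    (hk : (k : ℤ) = (chB x y h1 h2).n) :
    pr (chB x y h1 h2).f 0 k = chainProd (lo x) (FreeGroup.of x) (FreeGroup.of y) := by
  rw [BW.pr_all _ _ k hk, chainProd, show (chB x y h1 h2).N = 1000 from rfl]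
  refine congrArg List.prod (List.map_congr_left ?_)
  intro j hj
  have hj : j < 1000 := List.mem_range.1 hj
  simp only [BW.bp, chB, lt, List.map_cons, List.map_nil, List.prod_singleton, if_true]
  congr 4
  omega

theorem pl_prod {A : Type} (V : List (GenSym A)) :
    ((pl V).map lt).prod = (V.map FreeGroup.of).prod := by
  simp [pl, lt, Function.comp_def]

def vP {A : Type} (m : ℕ) (V : List (GenSym A)) (k : ℕ) : FreeGroup (GenSym A) :=
  (V.map FreeGroup.of).prod * FreeGroup.of GenSym.b ^ (100 * m + k + 1)

def vT {A : Type} (m : ℕ) (V : List (GenSym A)) : FreeGroup (GenSym A) :=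
  ((List.range 100).map fun k => vP m V k).prod

theorem prod_range_first {G : Type*} [Monoid G] (f : ℕ → G) (n : ℕ) :
    ((List.range (n + 1)).map f).prod = f 0 * ((List.range n).map fun k => f (k + 1)).prod := by
  rw [List.range_succ_eq_map, List.map_cons, List.prod_cons, List.map_map]
  rfl

theorem prod_range_last {G : Type*} [Monoid G] (f : ℕ → G) (n : ℕ) :
    ((List.range (n + 1)).map f).prod = ((List.range n).map f).prod * f n := by
  rw [List.range_succ, List.map_append, List.prod_append, List.map_cons, List.map_nil,
    List.prod_singleton]

theorem vT_first {A : Type} (m : ℕ) (V : List (GenSym A)) : vT m V =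
    vP m V 0 * ((List.range 99).map fun k => vP m V (k + 1)).prod := prod_range_first _ 99

theorem wB_pr_nsp {A : Type} (m : ℕ) (V : List (GenSym A)) (hV : V ≠ [])
    (hVe : ∀ x ∈ V, isElt x) (o : Option (GenSym A)) (ho : ∀ a ∈ o, isElt a) (hs : ¬ sp V o) (k : ℕ)
    (hk : (k : ℤ) = (wB m V hV hVe o ho).n) :
    pr (wB m V hV hVe o ho).f 0 k = ((W0 V o).map lt).prod * ((V.map FreeGroup.of).prod)⁻¹ *
      vT m V := by
  have hN : (wB m V hV hVe o ho).N = 99 + 1 := by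
    show wN V o = _
    simp [wN, hs]
  rw [BW.pr_all _ _ k hk, hN, vT_first, prod_range_first]
  have hE : ∀ j : ℕ, j < 100 → wE m V o j = 100 * m + j + 1 := by
    intro j hj
    simp only [wE, hs, if_false]
    omega
  have hwN : wN V o = 100 := hN
  have e0 : (wB m V hV hVe o ho).bp ((0 : ℕ) : ℤ) =
      ((W0 V o).map lt).prod * FreeGroup.of GenSym.b ^ (100 * m + 0 + 1) := by
    rw [← hE 0 (by norm_num)]
    simp only [BW.bp, wB, Nat.cast_zero, Int.zero_emod, if_true]
  rw [e0]
  have e1 : ∀ j : ℕ, j < 99 → (wB m V hV hVe o ho).bp ((j + 1 : ℕ) : ℤ) = vP m V (j + 1) := by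
    intro j hj
    rw [vP, ← hE _ (by omega)]
    simp only [BW.bp, wB]
    rw [if_neg, pl_prod]
    rw [hwN]; omega
  rw [List.map_congr_left (g := fun k => vP m V (k + 1)) (fun j hj => e1 j (List.mem_range.1 hj))]
  generalize ((List.range 99).map fun k => vP m V (k + 1)).prod = T
  rw [vP]
  generalize FreeGroup.of GenSym.b ^ (100 * m + 0 + 1) = B
  group

theorem wB_pr_sp {A : Type} (m : ℕ) (a : GenSym A) (hV : [a] ≠ [])
    (hVe : ∀ x ∈ [a], isElt x) (ho : ∀ x ∈ some a, isElt x) (k : ℕ)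
    (hk : (k : ℤ) = (wB m [a] hV hVe (some a) ho).n) :
    pr (wB m [a] hV hVe (some a) ho).f 0 k = (vP m [a] 0)⁻¹ * vT m [a] *
      FreeGroup.of GenSym.b ^ (100 * m + 1) := by
  have hs : sp [a] (some a) := ⟨a, rfl, rfl⟩
  have hwN : wN [a] (some a) = 99 := by simp [wN, hs]
  have hN : (wB m [a] hV hVe (some a) ho).N = 98 + 1 := hwN
  have hW : ∀ j, (wB m [a] hV hVe (some a) ho).W j = [(a, true)] := by
    intro j
    simp [wB, W0, pl]
  have e1 : ∀ j : ℕ, j < 98 → (wB m [a] hV hVe (some a) ho).bp (j : ℤ) = vP m [a] (j + 1) := by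
    intro j hj
    rw [BW.bp, hW, vP]
    simp only [wB, wE, hs, if_true]
    rw [if_neg (by omega)]
    simp only [lt, List.map_cons, List.map_nil, List.prod_singleton, if_true]
    congr 2
    omega
  have e2 : (wB m [a] hV hVe (some a) ho).bp ((98 : ℕ) : ℤ) = vP m [a] 99 *
      FreeGroup.of GenSym.b ^ (100 * m + 1) := by
    rw [BW.bp, hW, vP]
    simp only [wB, wE, hs, if_true]
    rw [if_pos (by norm_num)]
    simp only [lt, List.map_cons, List.map_nil, List.prod_singleton, if_true]
    rw [mul_assoc, ← pow_add]
    congr 2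
  rw [BW.pr_all _ _ k hk, hN, prod_range_last, e2,
    List.map_congr_left (g := fun j => vP m [a] (j + 1)) (fun j hj => e1 j (List.mem_range.1 hj)),
    vT_first, prod_range_last _ 98]
  generalize ((List.range 98).map fun k => vP m [a] (k + 1)).prod = T
  generalize FreeGroup.of GenSym.b ^ (100 * m + 1) = B
  rw [inv_mul_cancel_left, mul_assoc]

theorem vT_eq (m : ℕ) (as : Fin (S.arity m) → S.A) : vT m (wV S m as) =
    wProd m (fun i => FreeGroup.of (GenSym.elt (as i))) (FreeGroup.of GenSym.b) := by
  simp only [vT, vP, wProd, wV, List.map_ofFn, Function.comp_def]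

end SC

namespace SC

/-- the relators that hold in `G(𝒜)` -/
def Al (S : IndexedStructure) : Bool ⊕ Idx S → Prop
  | .inl _ => True
  | .inr (.ch _ _ _ _ _) => True
  | .inr (.w m _ as) => S.isFunc m ∨ S.relInterp m as

theorem ch_f_zero {A : Type} (x y : GenSym A) (h1 : x ≠ y) (h2 : ¬ isElt y) :
    ((chB x y h1 h2).f 0).1 = x := by
  have := (chB x y h1 h2).f_W 0 0 (by simp [chB])
  rw [BW.S_zero] at this
  simp only [Nat.cast_zero, add_zero] at this
  rw [this]
  rfl

theorem func_rel {A G : Type} [Group G] (φ : FreeGroup (GenSym A) →* G) (m : ℕ)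
    (V : List (GenSym A)) (hV : V ≠ [])
    (hVe : ∀ x ∈ V, isElt x) (a : GenSym A) (ho : ∀ x ∈ some a, isElt x) (k : ℕ)
    (hk : (k : ℤ) = (wB m V hV hVe (some a) ho).n)
    (h : φ (pr (wB m V hV hVe (some a) ho).f 0 k) = 1) : φ (vT m V) = φ (FreeGroup.of a) := by
  by_cases hs : sp V (some a)
  · obtain ⟨a', rfl, ha⟩ := hs
    obtain rfl : a = a' := by simpa using ha
    rw [wB_pr_sp m a hV hVe ho k hk] at h
    simp only [vP, List.map_cons, List.map_nil, List.prod_singleton, map_mul, map_inv,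
      Nat.add_zero] at h
    generalize φ (FreeGroup.of GenSym.b ^ (100 * m + 1)) = B at h
    generalize φ (FreeGroup.of a) = C at h ⊢
    generalize φ (vT m [a]) = D at h ⊢
    rw [mul_eq_one_iff_eq_inv, inv_mul_eq_iff_eq_mul, mul_inv_cancel_right] at h
    exact h
  · rw [wB_pr_nsp m V hV hVe _ ho hs k hk] at h
    have hW : ((W0 V (some a)).map lt).prod * ((V.map FreeGroup.of).prod)⁻¹ =
        (FreeGroup.of a)⁻¹ := by
      rcases V with _ | ⟨x, t⟩
      · exact (hV rfl).elim
      · simp only [W0]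
        split_ifs with h1 h2
        · exact (hs ⟨x, by rw [h2], by rw [h1]⟩).elim
        · rw [pl_prod, List.map_cons, List.prod_cons, h1]
          group
        · rw [List.map_cons, List.prod_cons, pl_prod, mul_inv_cancel_right]
          simp [lt]
    rw [hW, map_mul, map_inv, inv_mul_eq_one] at h
    exact h.symm

theorem fam_n (S : IndexedStructure) (p₁ p₂ : ℕ) (hp₁ : 10 ^ 10 < p₁) (hp₂ : 10 ^ 10 < p₂)
    (ρ : Idx S) : (fam S p₁ p₂ hp₁ hp₂).toWordFam.n (.inr ρ) = (bw S ρ).n := rfl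

theorem fam_f (S : IndexedStructure) (p₁ p₂ : ℕ) (hp₁ : 10 ^ 10 < p₁) (hp₂ : 10 ^ 10 < p₂)
    (ρ : Idx S) : (fam S p₁ p₂ hp₁ hp₂).toWordFam.f (.inr ρ) = (bw S ρ).f := rfl

theorem key (S : IndexedStructure) (p₁ p₂ : ℕ) (hp₁ : 10 ^ 10 < p₁) (hp₂ : 10 ^ 10 < p₂)
    (m : ℕ) (hm : 1 ≤ m) (hrel : ¬ S.isFunc m) (as : Fin (S.arity m) → S.A)
    (hnot : ¬ S.relInterp m as) :
    ∃ φ : FreeGroup (GenSym S.A) →* Equiv.Perm (U (GenSym S.A × Bool)),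
      (∀ r ∈ grpRels S p₁ p₂, φ r = 1) ∧
      φ (wProd m (fun i => FreeGroup.of (GenSym.elt (as i))) (FreeGroup.of GenSym.b)) ≠ 1 := by
  have hnat : ∀ z : ℤ, 0 < z → ((z.toNat : ℕ) : ℤ) = z := fun z hz => Int.toNat_of_nonneg hz.le
  let F := fam S p₁ p₂ hp₁ hp₂
  have hwr : ∀ (m : ℕ) (hm : 1 ≤ m) (as : Fin (S.arity m) → S.A) (k : ℕ), ¬ S.isFunc m →
      (k : ℤ) = (bw S (.w m hm as)).n → pr (bw S (.w m hm as)).f 0 k =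
      wProd m (fun i => FreeGroup.of (GenSym.elt (as i))) (FreeGroup.of GenSym.b) := by
    intro m hm as k hf hk
    have ho : wO S m as = none := by simp [wO, hf]
    have hs : ¬ sp (wV S m as) (wO S m as) := by
      rw [ho]
      rintro ⟨a, _, h⟩
      simp at h
    have := wB_pr_nsp m (wV S m as) (wV_ne S m hm as) (wV_elt S m as) (wO S m as)
      (wO_elt S m as) hs k hk
    rw [← vT_eq]
    refine this.trans ?_
    rw [ho]
    simp only [W0]
    rw [pl_prod, mul_inv_cancel, one_mul]
  obtain ⟨φ, h1, h2⟩ := F.toWordFam.main (Al S) (.inr (.w m hm as)) (by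
      rintro (h | h)
      · exact hrel h
      · exact hnot h) _ (hnat _ (F.toWordFam.pos _)) (by
      rintro (a | _ | _ | _ | _ | _)
      · exact ⟨.inr (.ch (.elt a) .c (by simp) (fun h => h) (by simp)), 0, trivial,
          ch_f_zero (.elt a) .c (by simp) (fun h => h)⟩
      · exact ⟨.inr (.ch .b .f1 (by simp) (fun h => h) (by simp)), 0, trivial,
          ch_f_zero .b .f1 (by simp) (fun h => h)⟩
      · exact ⟨.inr (.ch .c .f1 (by simp) (fun h => h) (by simp)), 0, trivial,
          ch_f_zero .c .f1 (by simp) (fun h => h)⟩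
      · exact ⟨.inr (.ch .d .f1 (by simp) (fun h => h) (by simp)), 0, trivial,
          ch_f_zero .d .f1 (by simp) (fun h => h)⟩
      · exact ⟨.inl true, 0, trivial, rfl⟩
      · exact ⟨.inl false, 0, trivial, rfl⟩)
  refine ⟨φ, ?_, ?_⟩
  swap
  · have := hwr m hm as _ hrel (hnat _ (F.toWordFam.pos (.inr (.w m hm as))))
    rw [← this]
    exact h2
  have hch : ∀ (x y : GenSym S.A), x ≠ y → ¬ isElt y → y ≠ .b →
      φ (chainProd (lo x) (FreeGroup.of x) (FreeGroup.of y)) = 1 := by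
    intro x y e1 e2 e3
    obtain ⟨k, hk⟩ : ∃ k : ℕ, (k : ℤ) = (chB x y e1 e2).n :=
      ⟨_, hnat (chB x y e1 e2).n (BW.n_pos (chB x y e1 e2))⟩
    have hk' : (k : ℤ) = (bw S (.ch x y e1 e2 e3)).n := by
      rw [hk, bw]
    rw [← fam_n S p₁ p₂ hp₁ hp₂] at hk'
    have h := h1 (.inr (.ch x y e1 e2 e3)) trivial k hk'
    rw [fam_f, bw] at h
    have e := ch_pr S x y e1 e2 k hk
    exact (congrArg φ e).symm.trans h
  have hpow : ∀ (z : GenSym S.A) (k : ℕ), pr (fun _ => (z, true)) 0 k = FreeGroup.of z ^ k := by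
    intro z k
    simp [pr, lt]
  intro r hr
  simp only [grpRels, Set.mem_union, Set.mem_insert_iff, Set.mem_singleton_iff,
    Set.mem_ofPred_eq] at hr
  rcases hr with ((hr | ⟨a, hr⟩) | ⟨m', hm', hf, as', hr⟩) | ⟨m', hm', hf, as', hR, hr⟩
  · rcases hr with hr | hr | hr | hr | hr | hr | hr | hr | hr | hr <;> rw [hr]
    · have := h1 (.inl true) trivial p₁ rfl
      rw [← hpow]; exact this
    · have := h1 (.inl false) trivial p₂ rfl
      rw [← hpow]; exact this
    · exact hch .f1 .f2 (by simp) (fun h => h) (by simp)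
    · exact hch .f2 .f1 (by simp) (fun h => h) (by simp)
    · exact hch .b .f1 (by simp) (fun h => h) (by simp)
    · exact hch .b .f2 (by simp) (fun h => h) (by simp)
    · exact hch .c .f1 (by simp) (fun h => h) (by simp)
    · exact hch .c .f2 (by simp) (fun h => h) (by simp)
    · exact hch .d .f1 (by simp) (fun h => h) (by simp)
    · exact hch .d .f2 (by simp) (fun h => h) (by simp)
  · rcases hr with hr | hr <;> rw [hr]
    · exact hch (.elt a) .c (by simp) (fun h => h) (by simp)
    · exact hch (.elt a) .d (by simp) (fun h => h) (by simp)
  · have hk := hnat _ (F.toWordFam.pos (.inr (.w m' hm' as')))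
    have h := h1 (.inr (.w m' hm' as')) (Or.inl hf) _ hk
    have aux : ∀ (o : Option (GenSym S.A)) (ho : ∀ x ∈ o, isElt x) (a : GenSym S.A) (k : ℕ),
        o = some a → (k : ℤ) = (wB m' (wV S m' as') (wV_ne S m' hm' as') (wV_elt S m' as') o ho).n →
        φ (pr (wB m' (wV S m' as') (wV_ne S m' hm' as') (wV_elt S m' as') o ho).f 0 k) = 1 →
        φ (vT m' (wV S m' as')) = φ (FreeGroup.of a) := by
      rintro o ho a k rfl hk h
      exact func_rel φ m' _ _ _ a ho k hk h
    have := aux (wO S m' as') (wO_elt S m' as') (.elt (S.funcInterp m' as')) _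
      (by simp [wO, hf]) hk h
    rw [hr, map_mul, map_inv, ← vT_eq, this, mul_inv_cancel]
  · have hk := hnat _ (F.toWordFam.pos (.inr (.w m' hm' as')))
    have := hwr m' hm' as' _ hf hk
    rw [hr, ← this]
    exact h1 (.inr (.w m' hm' as')) (Or.inr hR) _ hk

end SC

/-- Lemma `lem:functor-works`(2): if the `m`-th symbol of `L` is a relation
symbol `R` of arity `n`, and `a₁,…,aₙ ∈ A` are such that `w_m(a₁,…,aₙ,b) = e` holds in
`G(𝒜)`, then `R^𝒜(a₁,…,aₙ)` holds in `𝒜`. -/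
theorem stmt_4 (S : IndexedStructure) (p₁ p₂ : ℕ)
    (hp₁ : p₁.Prime) (hp₂ : p₂.Prime) (hne : p₁ ≠ p₂)
    (hbig₁ : 10 ^ 10 < p₁) (hbig₂ : 10 ^ 10 < p₂)
    (m : ℕ) (hm : 1 ≤ m) (hrel : ¬ S.isFunc m)
    (as : Fin (S.arity m) → S.A)
    (h : wProd m (fun i => gen S p₁ p₂ (GenSym.elt (as i))) (gen S p₁ p₂ GenSym.b) = 1) :
    S.relInterp m as := by
  by_contra hnot
  obtain ⟨φ, h1, h2⟩ := SC.key S p₁ p₂ hbig₁ hbig₂ m hm hrel as hnot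
  apply h2
  have hker : wProd m (fun i => FreeGroup.of (GenSym.elt (as i))) (FreeGroup.of GenSym.b) ∈
      Subgroup.normalClosure (grpRels S p₁ p₂) := by
    rw [← PresentedGroup.mk_eq_one_iff, SC.map_wProd]
    exact h
  have hle : Subgroup.normalClosure (grpRels S p₁ p₂) ≤ φ.ker :=
    Subgroup.normalClosure_le_normal (fun r hr => h1 r hr)
  exact hle hker
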